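/- arXiv:2404.09588 — 2 statements merged into one kernel-verified Lean document; each statement's English description precedes it below -/
import Mathlib

section
/- Let γ ∈ {0,1}, n ≥ 1, b ≥ 1 an integer, α ∈ (1/2, 1], and set r = nb/(2α − γ), assuming r > 1. Let p(·) ∈ P^log(ℝ^n) with p⁻ > 1. Then there exists a constant C > 0 such that for every u₀ ∈ L^{p(·)}(ℝ^n) ∩ L^r(ℝ^n): N_{p(·),r}((t,x) ↦ (𝔤_t^α ∗ u₀)(x)) ≤ C ‖u₀‖_{𝓛^{p(·)}_r}. -/
open MeasureTheory Set
open scoped ENNReal FourierTransform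

noncomputable section

/-- Euclidean space `ℝ^n`. -/
abbrev Rn (n : ℕ) := EuclideanSpace ℝ (Fin n)

/-- Luxemburg norm of an `ℝ≥0∞`-valued function for a variable exponent `p`. -/
def luxNorm {Ω : Type*} [MeasurableSpace Ω] (μ : Measure Ω) (p : Ω → ℝ) (f : Ω → ℝ≥0∞) : ℝ≥0∞ :=
  sInf {lam : ℝ≥0∞ | 0 < lam ∧ ∫⁻ x, (f x / lam) ^ (p x) ∂μ ≤ 1}

/-- Luxemburg norm `‖f‖_{L^{p(·)}}` of a real-valued function. -/
def luxNormR {Ω : Type*} [MeasurableSpace Ω] (μ : Measure Ω) (p : Ω → ℝ) (f : Ω → ℝ) : ℝ≥0∞ :=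
  luxNorm μ p (fun x => ENNReal.ofReal |f x|)

/-- `p(·) ∈ P^log(Ω)`: measurable, with values in `[1,∞)` on `Ω`, locally log-Hölder
continuous on `Ω`, and satisfying the log-Hölder decay condition on `Ω`. -/
def IsPLog {E : Type*} [NormedAddCommGroup E] [MeasurableSpace E] (Ω : Set E) (p : E → ℝ) : Prop :=
  Measurable p ∧ (∀ x ∈ Ω, 1 ≤ p x) ∧
  ∃ C₁ > (0:ℝ), ∃ C₂ > (0:ℝ), ∃ pinf : ℝ,
    (∀ x ∈ Ω, ∀ y ∈ Ω, x ≠ y →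
      |1 / p x - 1 / p y| ≤ C₁ / Real.log (Real.exp 1 + 1 / ‖x - y‖)) ∧
    (∀ x ∈ Ω, |1 / p x - 1 / pinf| ≤ C₂ / Real.log (Real.exp 1 + ‖x‖))

/-- The fractional heat kernel `𝔤_t^α` on `ℝ^n`: the inverse Fourier transform of
`ξ ↦ exp (-t‖ξ‖^{2α})` (it is real-valued; we take the real part). -/
def gKer (n : ℕ) (α t : ℝ) (x : Rn n) : ℝ :=
  (𝓕⁻ (fun ξ : Rn n => (Real.exp (-t * ‖ξ‖ ^ (2 * α)) : ℂ)) x).re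

/-- Convolution on `ℝ^n`. -/
def conv (n : ℕ) (g f : Rn n → ℝ) (x : Rn n) : ℝ := ∫ y, g (x - y) * f y

/-- `x ↦ ess sup_{t>0} |u(t,x)|`, as an `ℝ≥0∞`-valued function. -/
def timeSup (n : ℕ) (u : ℝ → Rn n → ℝ) (x : Rn n) : ℝ≥0∞ :=
  essSup (fun t => ENNReal.ofReal |u t x|) (volume.restrict (Ioi (0:ℝ)))

/-- Mixed norm `‖f‖_{𝓛^{p(·)}_r} = max {‖f‖_{L^{p(·)}}, ‖f‖_{L^r}}`. -/
def mixedNorm (n : ℕ) (p : Rn n → ℝ) (r : ℝ) (f : Rn n → ℝ) : ℝ≥0∞ :=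
  max (luxNormR volume p f) (luxNormR volume (fun _ => r) f)

/-- `N_{p(·),r}(u) = ‖x ↦ ess sup_{t>0}|u(t,x)|‖_{𝓛^{p(·)}_r}`. -/
def mixedN (n : ℕ) (p : Rn n → ℝ) (r : ℝ) (u : ℝ → Rn n → ℝ) : ℝ≥0∞ :=
  max (luxNorm volume p (timeSup n u)) (luxNorm volume (fun _ => r) (timeSup n u))

/-- The centred Hardy-Littlewood maximal function over balls of dyadic radius. -/
def dyadicMax {n : ℕ} (F : Rn n → ℝ≥0∞) (x : Rn n) : ℝ≥0∞ :=
  ⨆ k : ℤ, ⨍⁻ y in Metric.closedBall x ((2 : ℝ) ^ k), F y ∂volume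

lemma setLAverage_closedBall_le_dyadicMax {n : ℕ} (F : Rn n → ℝ≥0∞) (x : Rn n) (k : ℤ) :
    ⨍⁻ y in Metric.closedBall x ((2 : ℝ) ^ k), F y ∂volume ≤ dyadicMax F x :=
  le_iSup (fun k : ℤ => ⨍⁻ y in Metric.closedBall x ((2 : ℝ) ^ k), F y ∂volume) k

lemma measurable_dyadicMax {n : ℕ} {F : Rn n → ℝ≥0∞} (hF : Measurable F) :
    Measurable (dyadicMax F) := by
  refine Measurable.iSup fun k => ?_
  simp_rw [setLAverage_eq, Measure.addHaar_closedBall_center volume]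
  refine Measurable.div_const ?_ _
  have h : ∀ x : Rn n, ∫⁻ y in Metric.closedBall x ((2 : ℝ) ^ k), F y
      = ∫⁻ y, {z : Rn n × Rn n | dist z.2 z.1 ≤ 2 ^ k}.indicator (fun z => F z.2) (x, y) := by
    intro x
    rw [← lintegral_indicator Metric.isClosed_closedBall.measurableSet]
    rfl
  simp_rw [h]
  refine Measurable.lintegral_prod_right' (f := {z : Rn n × Rn n | dist z.2 z.1 ≤ 2 ^ k}.indicator
    (fun z => F z.2)) ?_
  refine (hF.comp measurable_snd).indicator ?_
  exact measurableSet_le (measurable_snd.dist measurable_fst) measurable_const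

lemma dyadicMax_const_mul {n : ℕ} (c : ℝ≥0∞) {F : Rn n → ℝ≥0∞} (hF : Measurable F) (x : Rn n) :
    dyadicMax (fun y => c * F y) x = c * dyadicMax F x := by
  simp_rw [dyadicMax, ENNReal.mul_iSup, setLAverage_eq, lintegral_const_mul c hF, mul_div_assoc]

lemma dyadicMax_mono {n : ℕ} {F G : Rn n → ℝ≥0∞} (h : ∀ x, F x ≤ G x) (x : Rn n) :
    dyadicMax F x ≤ dyadicMax G x :=
  iSup_mono fun _ => by
    simp_rw [setLAverage_eq]
    exact ENNReal.div_le_div_right (lintegral_mono h) _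

lemma dyadicMax_add_le {n : ℕ} {F : Rn n → ℝ≥0∞} (hF : Measurable F) (G : Rn n → ℝ≥0∞)
    (x : Rn n) : dyadicMax (fun y => F y + G y) x ≤ dyadicMax F x + dyadicMax G x := by
  refine iSup_le fun k => ?_
  refine le_trans (le_of_eq ?_) (add_le_add (setLAverage_closedBall_le_dyadicMax F x k)
    (setLAverage_closedBall_le_dyadicMax G x k))
  simp_rw [setLAverage_eq, lintegral_add_left hF, ENNReal.add_div]

lemma volume_closedBall_rn {n : ℕ} (x : Rn n) {R : ℝ} (hR : 0 ≤ R) :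
    volume (Metric.closedBall x R)
      = ENNReal.ofReal (R ^ n) * volume (Metric.ball (0 : Rn n) 1) := by
  rw [Measure.addHaar_closedBall _ _ hR, finrank_euclideanSpace_fin]

/-- The weak type `(1,1)` inequality for the maximal function. -/
theorem mul_volume_lt_dyadicMax_le {n : ℕ} (hn : 1 ≤ n) (F : Rn n → ℝ≥0∞)
    {l : ℝ≥0∞} (hl0 : l ≠ 0) (hlt : l ≠ ⊤) :
    l * volume {x | l < dyadicMax F x} ≤ 5 ^ n * ∫⁻ y, F y := by
  by_cases hfin : ∫⁻ y, F y = ⊤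
  · simp [hfin, ENNReal.mul_top]
  set V := volume (Metric.ball (0 : Rn n) 1) with hV
  have hV0 : V ≠ 0 := (Metric.measure_ball_pos _ _ one_pos).ne'
  have hVt : V ≠ ⊤ := measure_ball_lt_top.ne
  set t := {x | l < dyadicMax F x} with ht
  have hex : ∀ x ∈ t, ∃ k : ℤ, l * volume (Metric.closedBall x ((2 : ℝ) ^ k))
      ≤ ∫⁻ y in Metric.closedBall x ((2 : ℝ) ^ k), F y := by
    intro x hx
    rw [ht, mem_ofPred_eq, dyadicMax] at hx
    obtain ⟨k, hk⟩ := lt_iSup_iff.1 hx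
    refine ⟨k, ?_⟩
    rw [setLAverage_eq] at hk
    exact ENNReal.mul_le_of_le_div hk.le
  choose! k hk using hex
  have hr : ∀ x ∈ t, (2 : ℝ) ^ k x ≤ max 1 ((∫⁻ y, F y) / (l * V)).toReal := by
    intro x hx
    by_cases h1 : (2 : ℝ) ^ k x ≤ 1
    · exact h1.trans (le_max_left _ _)
    refine le_max_of_le_right ?_
    push Not at h1
    have h2 := (hk x hx).trans (setLIntegral_le_lintegral _ _)
    rw [volume_closedBall_rn _ (by positivity), ← hV] at h2
    have h3 : ENNReal.ofReal ((2 : ℝ) ^ k x) ≤ (∫⁻ y, F y) / (l * V) := by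
      rw [ENNReal.le_div_iff_mul_le (Or.inl (mul_ne_zero hl0 hV0))
        (Or.inl (ENNReal.mul_ne_top hlt hVt))]
      refine le_trans ?_ h2
      rw [mul_left_comm]
      gcongr
      exact le_self_pow₀ h1.le (by omega)
    rw [← ENNReal.ofReal_le_iff_le_toReal]
    · exact h3
    · exact ENNReal.div_ne_top hfin (mul_ne_zero hl0 hV0)
  obtain ⟨u, hut, hdisj, hcov⟩ := Vitali.exists_disjoint_subfamily_covering_enlargement_closedBall
    t id (fun x => (2 : ℝ) ^ k x) _ hr 5 (by norm_num)
  have hcount : u.Countable := by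
    refine hdisj.countable_of_nonempty_interior fun x _ => ⟨x, ?_⟩
    exact Metric.ball_subset_interior_closedBall (Metric.mem_ball_self (by positivity))
  have hsub : t ⊆ ⋃ b ∈ u, Metric.closedBall b (5 * (2 : ℝ) ^ k b) := by
    intro x hx
    obtain ⟨b, hb, hb'⟩ := hcov x hx
    exact mem_biUnion hb (hb' (Metric.mem_closedBall_self (by positivity)))
  have hscale : ∀ b : Rn n, volume (Metric.closedBall b (5 * (2 : ℝ) ^ k b))
      = 5 ^ n * volume (Metric.closedBall b ((2 : ℝ) ^ k b)) := by
    intro b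
    rw [volume_closedBall_rn _ (by positivity), volume_closedBall_rn _ (by positivity), mul_pow,
      ENNReal.ofReal_mul (by positivity), ENNReal.ofReal_pow (by norm_num), mul_assoc]
    norm_num
  have := hcount.to_subtype
  calc l * volume t ≤ l * ∑' b : u, volume (Metric.closedBall (b : Rn n) (5 * (2 : ℝ) ^ k b)) := by
        gcongr
        exact (measure_mono hsub).trans (measure_biUnion_le _ hcount _)
    _ = 5 ^ n * ∑' b : u, l * volume (Metric.closedBall (b : Rn n) ((2 : ℝ) ^ k b)) := by
        simp_rw [hscale, ENNReal.tsum_mul_left]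
        ring
    _ ≤ 5 ^ n * ∑' b : u, ∫⁻ y in Metric.closedBall (b : Rn n) ((2 : ℝ) ^ k b), F y := by
        gcongr with b
        exact hk b (hut b.2)
    _ ≤ 5 ^ n * ∫⁻ y, F y := by
        gcongr
        rw [← lintegral_biUnion (s := fun b => Metric.closedBall b ((2:ℝ) ^ k b)) hcount
          (fun _ _ => Metric.isClosed_closedBall.measurableSet) hdisj]
        exact setLIntegral_le_lintegral _ _

lemma lintegral_Ioo_ofReal_rpow {a q : ℝ} (ha : 0 ≤ a) (hq : 0 < q) :
    ∫⁻ l in Ioo 0 a, ENNReal.ofReal (l ^ (q - 1)) = ENNReal.ofReal (a ^ q / q) := by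
  have hint : IntervalIntegrable (fun l : ℝ => l ^ (q - 1)) volume 0 a :=
    intervalIntegral.intervalIntegrable_rpow' (by linarith)
  rw [restrict_Ioo_eq_restrict_Ioc, ← ofReal_integral_eq_lintegral_ofReal,
    ← intervalIntegral.integral_of_le ha, integral_rpow (Or.inl (by linarith))]
  · simp [hq.ne']
  · rwa [intervalIntegrable_iff_integrableOn_Ioc_of_le ha] at hint
  · filter_upwards [ae_restrict_mem measurableSet_Ioc] with l hl
    exact Real.rpow_nonneg hl.1.le _

lemma rpow_le_lintegral_indicator {m : ℝ} (hm : 0 < m) (a : ℝ≥0∞) :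
    a ^ m ≤ ∫⁻ l in Ioi (0 : ℝ), ENNReal.ofReal (m * l ^ (m - 1)) *
      {l : ℝ | ENNReal.ofReal l < a}.indicator 1 l := by
  have key : ∀ c : ℝ, 0 ≤ c → ENNReal.ofReal c ≤ a → ENNReal.ofReal c ^ m ≤
      ∫⁻ l in Ioi (0 : ℝ), ENNReal.ofReal (m * l ^ (m - 1)) *
        {l : ℝ | ENNReal.ofReal l < a}.indicator 1 l := by
    intro c hc hca
    calc ENNReal.ofReal c ^ m = ENNReal.ofReal m * ENNReal.ofReal (c ^ m / m) := by
          rw [← ENNReal.ofReal_mul hm.le, ENNReal.ofReal_rpow_of_nonneg hc hm.le]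
          congr 1
          field_simp
      _ = ∫⁻ l in Ioo 0 c, ENNReal.ofReal (m * l ^ (m - 1)) *
          {l : ℝ | ENNReal.ofReal l < a}.indicator 1 l := by
          rw [← lintegral_Ioo_ofReal_rpow hc hm, ← lintegral_const_mul _ (by fun_prop)]
          refine setLIntegral_congr_fun measurableSet_Ioo fun l hl => ?_
          have hla : ENNReal.ofReal l < a :=
            lt_of_lt_of_le ((ENNReal.ofReal_lt_ofReal_iff (hl.1.trans hl.2)).2 hl.2) hca
          simp [indicator, hla, ENNReal.ofReal_mul hm.le]
      _ ≤ _ := lintegral_mono_set Ioo_subset_Ioi_self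
  rcases eq_or_ne a ⊤ with rfl | ha
  · rw [ENNReal.top_rpow_of_pos hm]
    refine (ENNReal.eq_top_of_forall_nnreal_le fun r => ?_).ge
    have := key ((r : ℝ) ^ m⁻¹) (by positivity) le_top
    rwa [ENNReal.ofReal_rpow_of_nonneg (by positivity) hm.le,
      Real.rpow_inv_rpow r.coe_nonneg hm.ne', ENNReal.ofReal_coe_nnreal] at this
  · simpa [ENNReal.ofReal_toReal ha] using key a.toReal ENNReal.toReal_nonneg
      (ENNReal.ofReal_toReal ha).le

lemma mul_lintegral_indicator_le_rpow {m : ℝ} (hm : 1 < m) (a : ℝ≥0∞) :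
    a * ∫⁻ l in Ioi (0 : ℝ), ENNReal.ofReal (l ^ (m - 2)) *
      {l : ℝ | ENNReal.ofReal (l / 2) < a}.indicator 1 l
      ≤ ENNReal.ofReal (2 ^ (m - 1) / (m - 1)) * a ^ m := by
  have hm' : 0 < m - 1 := by linarith
  have hc : 0 < 2 ^ (m - 1) / (m - 1) := by positivity
  rcases eq_or_ne a ⊤ with rfl | ha
  · rw [ENNReal.top_rpow_of_pos (by linarith), ENNReal.mul_top (by simpa using hc)]
    exact le_top
  have h0 : ∀ l ∈ Ioi (0 : ℝ), ENNReal.ofReal (l ^ (m - 2)) *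
      {l : ℝ | ENNReal.ofReal (l / 2) < a}.indicator 1 l
      = (Ioo 0 (2 * a.toReal)).indicator (fun l => ENNReal.ofReal (l ^ (m - 1 - 1))) l := by
    intro l hl
    have hiff : ENNReal.ofReal (l / 2) < a ↔ l < 2 * a.toReal := by
      rw [ENNReal.ofReal_lt_iff_lt_toReal (by have := mem_Ioi.1 hl; positivity) ha]
      constructor <;> intro h <;> linarith
    have hl' : 0 < l := hl
    simp only [indicator, mem_ofPred_eq, hiff, mem_Ioo, hl', true_and,
      show m - 1 - 1 = m - 2 by ring]
    split_ifs <;> simp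
  rw [setLIntegral_congr_fun measurableSet_Ioi h0, lintegral_indicator measurableSet_Ioo,
    Measure.restrict_restrict measurableSet_Ioo, inter_eq_left.2 Ioo_subset_Ioi_self,
    lintegral_Ioo_ofReal_rpow (by positivity) hm']
  refine le_of_eq ?_
  lift a to NNReal using ha
  simp only [ENNReal.coe_toReal]
  rw [← ENNReal.ofReal_coe_nnreal, ENNReal.ofReal_rpow_of_nonneg (by positivity) (by linarith),
    ← ENNReal.ofReal_mul (by positivity), ← ENNReal.ofReal_mul (by positivity)]
  congr 1
  rw [Real.mul_rpow (by positivity) (by positivity)]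
  rcases eq_or_ne (a : ℝ) 0 with h | h
  · simp [h, (by linarith : m ≠ 0)]
  · rw [show (a : ℝ) ^ m = a ^ (m - 1) * a by
      rw [← Real.rpow_add_one h]; congr 1; ring]
    ring

lemma dyadicMax_const_le {n : ℕ} (c : ℝ≥0∞) (x : Rn n) :
    dyadicMax (fun _ => c) x ≤ c := by
  refine iSup_le fun k => ?_
  rw [setLAverage_const]
  · exact (Metric.measure_closedBall_pos _ _ (by positivity)).ne'
  · exact measure_closedBall_lt_top.ne

lemma mul_volume_lt_dyadicMax_le_setLIntegral {n : ℕ} (hn : 1 ≤ n) {F : Rn n → ℝ≥0∞}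
    (hF : Measurable F) {l : ℝ} (hl : 0 < l) :
    ENNReal.ofReal (l / 2) * volume {x | ENNReal.ofReal l < dyadicMax F x} ≤
      5 ^ n * ∫⁻ y, {y | ENNReal.ofReal (l / 2) < F y}.indicator F y := by
  refine le_trans ?_ (mul_volume_lt_dyadicMax_le hn _ (l := ENNReal.ofReal (l / 2))
    (by simpa using hl) ENNReal.ofReal_ne_top)
  refine mul_le_mul_right (measure_mono fun x hx => ?_) _
  by_contra hcon
  rw [mem_ofPred_eq] at hx hcon
  rw [not_lt] at hcon
  refine hx.not_ge ?_
  have hmeas : Measurable ({y | ENNReal.ofReal (l / 2) < F y}.indicator F) :=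
    hF.indicator (measurableSet_lt measurable_const hF)
  calc dyadicMax F x ≤ dyadicMax (fun y => {y | ENNReal.ofReal (l / 2) < F y}.indicator F y
          + ENNReal.ofReal (l / 2)) x := by
        refine dyadicMax_mono (fun y => ?_) x
        by_cases hy : ENNReal.ofReal (l / 2) < F y
        · simp [indicator, hy]
        · simpa [indicator, hy] using not_lt.1 hy
    _ ≤ _ := dyadicMax_add_le hmeas _ x
    _ ≤ ENNReal.ofReal (l / 2) + ENNReal.ofReal (l / 2) :=
        add_le_add hcon (dyadicMax_const_le _ x)
    _ = ENNReal.ofReal l := by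
        rw [← ENNReal.ofReal_add (by positivity) (by positivity), add_halves]

/-- The Hardy-Littlewood maximal theorem in `L^m`, `m > 1`. -/
theorem lintegral_dyadicMax_rpow_le {n : ℕ} (hn : 1 ≤ n) {m : ℝ} (hm : 1 < m) :
    ∃ C : ℝ≥0∞, C ≠ ⊤ ∧ ∀ F : Rn n → ℝ≥0∞, Measurable F →
      ∫⁻ x, dyadicMax F x ^ m ≤ C * ∫⁻ x, F x ^ m := by
  have hm0 : 0 < m := by linarith
  refine ⟨ENNReal.ofReal (2 * m) * 5 ^ n * ENNReal.ofReal (2 ^ (m - 1) / (m - 1)),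
    by finiteness, fun F hF => ?_⟩
  have hM := measurable_dyadicMax hF
  have hmeas1 : Measurable (fun z : Rn n × ℝ => ENNReal.ofReal (m * z.2 ^ (m - 1)) *
      {z : Rn n × ℝ | ENNReal.ofReal z.2 < dyadicMax F z.1}.indicator 1 z) := by
    refine Measurable.mul (by fun_prop) (measurable_one.indicator ?_)
    exact measurableSet_lt (by fun_prop) (hM.comp measurable_fst)
  have hmeas2 : Measurable (fun z : ℝ × Rn n => ENNReal.ofReal (z.1 ^ (m - 2)) *
      {z : ℝ × Rn n | ENNReal.ofReal (z.1 / 2) < F z.2}.indicator (fun z => F z.2) z) := by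
    refine Measurable.mul (by fun_prop) ((hF.comp measurable_snd).indicator ?_)
    exact measurableSet_lt (by fun_prop) (hF.comp measurable_snd)
  calc ∫⁻ x, dyadicMax F x ^ m
      ≤ ∫⁻ x, ∫⁻ l in Ioi (0 : ℝ), ENNReal.ofReal (m * l ^ (m - 1)) *
        {l : ℝ | ENNReal.ofReal l < dyadicMax F x}.indicator 1 l :=
        lintegral_mono fun x => rpow_le_lintegral_indicator hm0 _
    _ = ∫⁻ l in Ioi (0 : ℝ), ∫⁻ x, ENNReal.ofReal (m * l ^ (m - 1)) *
        {l : ℝ | ENNReal.ofReal l < dyadicMax F x}.indicator 1 l :=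
        lintegral_lintegral_swap hmeas1.aemeasurable
    _ = ∫⁻ l in Ioi (0 : ℝ), ENNReal.ofReal (m * l ^ (m - 1)) *
          volume {x | ENNReal.ofReal l < dyadicMax F x} := by
        refine lintegral_congr fun l => ?_
        rw [← lintegral_indicator_one (measurableSet_lt measurable_const hM),
          ← lintegral_const_mul _ (measurable_one.indicator
            (measurableSet_lt measurable_const hM))]
        rfl
    _ ≤ ∫⁻ l in Ioi (0 : ℝ), ENNReal.ofReal (2 * m) * 5 ^ n * ∫⁻ y, ENNReal.ofReal (l ^ (m - 2)) *
          {y | ENNReal.ofReal (l / 2) < F y}.indicator F y := by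
        refine setLIntegral_mono' measurableSet_Ioi fun l hl => ?_
        have hl' : 0 < l := hl
        rw [lintegral_const_mul _ (hF.indicator (measurableSet_lt measurable_const hF)),
          show m * l ^ (m - 1) = (2 * m) * l ^ (m - 2) * (l / 2) by
            rw [show m - 1 = m - 2 + 1 by ring, Real.rpow_add_one hl'.ne']; ring,
          ENNReal.ofReal_mul (by positivity), ENNReal.ofReal_mul (by positivity), mul_assoc]
        refine (mul_le_mul_right (mul_volume_lt_dyadicMax_le_setLIntegral hn hF hl') _).trans_eq ?_
        ring
    _ = ENNReal.ofReal (2 * m) * 5 ^ n * ∫⁻ y, ∫⁻ l in Ioi (0 : ℝ), ENNReal.ofReal (l ^ (m - 2)) *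
          {y | ENNReal.ofReal (l / 2) < F y}.indicator F y := by
        rw [lintegral_const_mul' _ _ (by finiteness)]
        congr 1
        exact lintegral_lintegral_swap hmeas2.aemeasurable
    _ ≤ ENNReal.ofReal (2 * m) * 5 ^ n * ∫⁻ y,
          ENNReal.ofReal (2 ^ (m - 1) / (m - 1)) * F y ^ m := by
        gcongr with y
        refine le_trans (le_of_eq ?_) (mul_lintegral_indicator_le_rpow hm (F y))
        rw [← lintegral_const_mul (F y) (f := fun l : ℝ => ENNReal.ofReal (l ^ (m - 2)) *
          {l : ℝ | ENNReal.ofReal (l / 2) < F y}.indicator 1 l) (Measurable.mul (by fun_prop)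
          (measurable_one.indicator (measurableSet_lt (by fun_prop) measurable_const)))]
        refine lintegral_congr fun l => ?_
        by_cases hy : ENNReal.ofReal (l / 2) < F y
        · simp [indicator, hy, mul_comm]
        · simp [indicator, hy]
    _ = _ := by
        rw [lintegral_const_mul _ (hF.pow_const m)]
        simp only [mul_assoc]

lemma setLAverage_rpow_le {n : ℕ} {F : Rn n → ℝ≥0∞} (hF : Measurable F) (x : Rn n) {R s : ℝ}
    (hR : 0 < R) (hs : 1 ≤ s) :
    (⨍⁻ y in Metric.closedBall x R, F y ∂volume) ^ s
      ≤ ⨍⁻ y in Metric.closedBall x R, F y ^ s ∂volume := by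
  have h0 : NeZero (volume.restrict (Metric.closedBall x R)) :=
    ⟨by simpa using (Metric.measure_closedBall_pos volume x hR).ne'⟩
  have hfin : IsFiniteMeasure (volume.restrict (Metric.closedBall x R)) :=
    ⟨by simpa using measure_closedBall_lt_top⟩
  simp only [laverage]
  set ν := (volume.restrict (Metric.closedBall x R) univ)⁻¹ •
    volume.restrict (Metric.closedBall x R)
  have hν : IsProbabilityMeasure ν := inferInstance
  have h := eLpNorm'_le_eLpNorm'_of_exponent_le (p := 1) (q := s) one_pos hs ν
    hF.aestronglyMeasurable
  simp only [eLpNorm', enorm_eq_self, ENNReal.rpow_one, one_div, inv_one] at h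
  exact (ENNReal.le_rpow_inv_iff (by linarith)).1 h

lemma setLAverage_mono_on {n : ℕ} {F G : Rn n → ℝ≥0∞} (x : Rn n) (R : ℝ)
    (h : ∀ y ∈ Metric.closedBall x R, F y ≤ G y) :
    ⨍⁻ y in Metric.closedBall x R, F y ∂volume ≤ ⨍⁻ y in Metric.closedBall x R, G y ∂volume := by
  simp_rw [setLAverage_eq]
  exact ENNReal.div_le_div_right (setLIntegral_mono' Metric.isClosed_closedBall.measurableSet h) _

/-- The constant in the local estimate for averages under log-Hölder continuity. -/
def localConst (n : ℕ) (A : ℝ) : ℝ :=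
  Real.exp (-(A * (|Real.log (volume (Metric.ball (0 : Rn n) 1)).toReal| + n)))

lemma one_le_log_exp_one_add {t : ℝ} (ht : 0 ≤ t) : 1 ≤ Real.log (Real.exp 1 + t) := by
  rw [Real.le_log_iff_exp_le (by positivity)]
  linarith

lemma localConst_le_volume_rpow {n : ℕ} {A : ℝ} (hA : 0 < A) (x : Rn n) {R : ℝ} (hR : 0 < R) :
    ENNReal.ofReal (localConst n A) ≤ volume (Metric.closedBall x R) ^
      (A / Real.log (Real.exp 1 + 1 / R)) := by
  set V := volume (Metric.ball (0 : Rn n) 1) with hV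
  have hV0 : V ≠ 0 := (Metric.measure_ball_pos _ _ one_pos).ne'
  have hVt : V ≠ ⊤ := measure_ball_lt_top.ne
  have hv : 0 < V.toReal := ENNReal.toReal_pos hV0 hVt
  have hL := one_le_log_exp_one_add (t := 1 / R) (by positivity)
  set L := Real.log (Real.exp 1 + 1 / R) with hLdef
  have hRn : 0 < R ^ n := by positivity
  rw [volume_closedBall_rn x hR.le, ← hV, ← ENNReal.ofReal_toReal hVt,
    ← ENNReal.ofReal_mul (by positivity), ENNReal.ofReal_rpow_of_pos (by positivity)]
  apply ENNReal.ofReal_le_ofReal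
  rw [Real.rpow_def_of_pos (by positivity), localConst, ← hV]
  apply Real.exp_le_exp.2
  rw [Real.log_mul hRn.ne' hv.ne', Real.log_pow]
  have h1 : -Real.log R ≤ L := by
    rw [← Real.log_inv]
    apply Real.log_le_log (by positivity)
    rw [one_div]
    linarith [Real.exp_pos 1]
  have h2 : -|Real.log V.toReal| ≤ Real.log V.toReal := neg_abs_le _
  have h3 : (|Real.log V.toReal|) ≤ |Real.log V.toReal| * L :=
    le_mul_of_one_le_right (abs_nonneg _) hL
  have h4 : (n : ℝ) * -Real.log R ≤ n * L := by gcongr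
  have h5 : -((|Real.log V.toReal| + n) * L) ≤ n * Real.log R + Real.log V.toReal := by
    linarith
  calc -(A * (|Real.log V.toReal| + n)) = -((|Real.log V.toReal| + n) * L) * (A / L) := by
        field_simp
    _ ≤ _ := by gcongr

lemma localConst_le_one {n : ℕ} {A : ℝ} (hA : 0 < A) : localConst n A ≤ 1 := by
  rw [localConst, Real.exp_le_one_iff]
  have : 0 ≤ A * (|Real.log (volume (Metric.ball (0 : Rn n) 1)).toReal| + n) := by positivity
  linarith

/-- Averages of functions with values in `{0} ∪ [1, ∞]` under local log-Hölder continuity. -/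
lemma localConst_mul_setLAverage_le {n : ℕ} {s : Rn n → ℝ}
    (hs : ∀ x, 1 ≤ s x) {A : ℝ} (hA : 0 < A)
    (hlog : ∀ x y, x ≠ y → |1 / s x - 1 / s y| ≤ A / Real.log (Real.exp 1 + 1 / ‖x - y‖))
    {F : Rn n → ℝ≥0∞} (hF : Measurable F) (hF1 : ∀ y, F y = 0 ∨ 1 ≤ F y)
    (hint : ∫⁻ y, F y ^ s y ≤ 1) (x : Rn n) {R : ℝ} (hR : 0 < R) :
    ENNReal.ofReal (localConst n A) * ⨍⁻ y in Metric.closedBall x R, F y ∂volume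
      ≤ (⨍⁻ y in Metric.closedBall x R, F y ^ s y ∂volume) ^ (1 / s x) := by
  set a := ⨍⁻ y in Metric.closedBall x R, F y ^ s y ∂volume with ha
  set vol := volume (Metric.closedBall x R) with hvol
  have hvol0 : vol ≠ 0 := (Metric.measure_closedBall_pos _ _ hR).ne'
  have hvolt : vol ≠ ⊤ := measure_closedBall_lt_top.ne
  set w := A / Real.log (Real.exp 1 + 1 / R) with hw
  have hLR := one_le_log_exp_one_add (t := 1 / R) (by positivity)
  have hw0 : 0 < w := by positivity
  have hsx : 0 < s x := by linarith [hs x]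
  set Q := min (1 / s x + w) 1 with hQ
  have hQs : 1 / s x ≤ Q :=
    le_min (by linarith) (by rw [div_le_one hsx]; exact hs x)
  have hQ0 : 0 < Q := lt_of_lt_of_le (by positivity) hQs
  have hav : a ≤ vol⁻¹ := by
    rw [ha, setLAverage_eq, ← one_div]
    exact ENNReal.div_le_div_right ((setLIntegral_le_lintegral _ _).trans hint) _
  have hball : ∀ y ∈ Metric.closedBall x R, Q⁻¹ ≤ s y := by
    intro y hy
    have hsy : 0 < s y := by linarith [hs y]
    rw [inv_le_comm₀ hQ0 hsy, ← one_div]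
    refine le_min ?_ (by rw [div_le_one hsy]; exact hs y)
    rcases eq_or_ne y x with rfl | hyx
    · linarith
    have h1 := abs_le.1 (hlog y x hyx)
    have hpos : 0 < ‖y - x‖ := norm_pos_iff.2 (sub_ne_zero.2 hyx)
    have hle : ‖y - x‖ ≤ R := by rwa [← dist_eq_norm]
    have h2 : A / Real.log (Real.exp 1 + 1 / ‖y - x‖) ≤ w := by
      rw [hw]
      gcongr
    linarith [h1.2]
  have hJ : ⨍⁻ y in Metric.closedBall x R, F y ∂volume ≤ a ^ Q := by
    rw [← inv_inv Q, ENNReal.le_rpow_inv_iff (by positivity)]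
    refine (setLAverage_rpow_le hF x hR ((one_le_inv₀ hQ0).2 (min_le_right _ _))).trans ?_
    refine setLAverage_mono_on x R fun y hy => ?_
    rcases hF1 y with h | h
    · rw [h, ENNReal.zero_rpow_of_pos (by positivity)]
      exact zero_le
    · exact ENNReal.rpow_le_rpow_of_exponent_le h (hball y hy)
  refine (mul_le_mul_right hJ _).trans ?_
  rcases le_or_gt a 1 with h1 | h1
  · calc _ ≤ 1 * a ^ Q := by
          gcongr
          rw [ENNReal.ofReal_le_one]
          exact localConst_le_one hA
      _ ≤ _ := by
          rw [one_mul]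
          exact ENNReal.rpow_le_rpow_of_exponent_ge h1 hQs
  · have hat : a ≠ ⊤ := ne_top_of_le_ne_top (by simpa using hvol0) hav
    calc _ ≤ vol ^ w * (a ^ (1 / s x) * (vol⁻¹) ^ w) := by
          gcongr
          · exact localConst_le_volume_rpow hA x hR
          · rw [show Q = 1 / s x + (Q - 1 / s x) by ring,
              ENNReal.rpow_add _ _ (by positivity) hat]
            gcongr
            refine (ENNReal.rpow_le_rpow_of_exponent_le h1.le (z := w) ?_).trans
              (ENNReal.rpow_le_rpow hav hw0.le)
            have := min_le_left (1 / s x + w) 1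
            linarith
      _ = a ^ (1 / s x) := by
          rw [mul_left_comm, ← ENNReal.mul_rpow_of_nonneg _ _ hw0.le,
            ENNReal.mul_inv_cancel hvol0 hvolt, ENNReal.one_rpow, mul_one]

/-- The decaying weight `(e + ‖x‖)^{-(n+1)}`. -/
def decayWeight (n : ℕ) (x : Rn n) : ℝ := (Real.exp 1 + ‖x‖) ^ (-((n : ℝ) + 1))

lemma decayWeight_pos {n : ℕ} (x : Rn n) : 0 < decayWeight n x := by
  unfold decayWeight
  positivity

lemma decayWeight_le_one {n : ℕ} (x : Rn n) : decayWeight n x ≤ 1 := by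
  unfold decayWeight
  apply Real.rpow_le_one_of_one_le_of_nonpos
  · linarith [Real.add_one_le_exp (1 : ℝ), norm_nonneg x]
  · linarith [(Nat.cast_nonneg n : (0:ℝ) ≤ n)]

lemma measurable_decayWeight (n : ℕ) : Measurable (decayWeight n) := by
  unfold decayWeight
  fun_prop

lemma lintegral_decayWeight_ne_top (n : ℕ) :
    ∫⁻ x, ENNReal.ofReal (decayWeight n x) ≠ ⊤ := by
  have h : ∫⁻ x : Rn n, ENNReal.ofReal ((1 + ‖x‖) ^ (-((n : ℝ) + 1))) < ⊤ :=
    finite_integral_one_add_norm (by simp)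
  refine ne_top_of_le_ne_top h.ne (lintegral_mono fun x => ENNReal.ofReal_le_ofReal ?_)
  unfold decayWeight
  apply Real.rpow_le_rpow_of_nonpos (by positivity)
  · linarith [Real.add_one_le_exp (1 : ℝ)]
  · linarith [(Nat.cast_nonneg n : (0:ℝ) ≤ n)]

/-- Comparison of two exponents on `[0,1]` with an error controlled by `w`. -/
lemma mul_rpow_le_max {t b w p q : ℝ} (ht0 : 0 ≤ t) (ht1 : t ≤ 1) (hb0 : 0 ≤ b) (hb1 : b ≤ 1)
    (hw0 : 0 < w) (hw1 : w ≤ 1) (hp : 0 < p) (hq : 0 < q) (h : b ≤ w ^ (1 / p - 1 / q)) :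
    (b * t) ^ p ≤ max (t ^ q) w := by
  set c := max (t ^ q) w with hc
  have hc0 : 0 < c := lt_of_lt_of_le hw0 (le_max_right _ _)
  have hc1 : c ≤ 1 := max_le (Real.rpow_le_one ht0 ht1 hq.le) hw1
  have h1 : t ≤ c ^ (1 / q) := by
    rw [one_div, Real.le_rpow_inv_iff_of_pos ht0 hc0.le hq]
    exact le_max_left _ _
  have h2 : b ≤ c ^ (1 / p - 1 / q) := by
    rcases le_total 0 (1 / p - 1 / q) with h0 | h0
    · exact h.trans (Real.rpow_le_rpow hw0.le (le_max_right _ _) h0)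
    · exact hb1.trans (Real.one_le_rpow_of_pos_of_le_one_of_nonpos hc0 hc1 h0)
  have h3 : b * t ≤ c ^ p⁻¹ := by
    calc b * t ≤ c ^ (1 / p - 1 / q) * c ^ (1 / q) := by gcongr
      _ = c ^ p⁻¹ := by rw [← Real.rpow_add hc0]; congr 1; rw [one_div]; ring
  exact (Real.le_rpow_inv_iff_of_pos (by positivity) hc0.le hp).1 h3

/-- The constant in the estimate at infinity for averages under log-Hölder decay. -/
def decayConst (n : ℕ) (D : ℝ) : ℝ := Real.exp (-(2 * D * (n + 1)))

lemma decayConst_mul_rpow_le {n : ℕ} {s : Rn n → ℝ}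
    (hs : ∀ x, 1 ≤ s x) {D q : ℝ} (hD : 0 < D)
    (hdec : ∀ x, |1 / s x - q| ≤ D / Real.log (Real.exp 1 + ‖x‖)) (x y : Rn n) {t : ℝ}
    (ht0 : 0 ≤ t) (ht1 : t ≤ 1) :
    (decayConst n D * t) ^ s x ≤ t ^ s y + decayWeight n x + decayWeight n y := by
  have hb1 : decayConst n D ≤ 1 := by
    rw [decayConst, Real.exp_le_one_iff]
    have : 0 ≤ 2 * D * ((n : ℝ) + 1) := by positivity
    linarith
  have hx := decayWeight_pos x
  have hy := decayWeight_pos y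
  have hsx := hs x
  have hsy := hs y
  obtain ⟨z, hz, hzx, hzy⟩ : ∃ z, (z = x ∨ z = y) ∧ ‖z‖ ≤ ‖x‖ ∧ ‖z‖ ≤ ‖y‖ := by
    rcases le_total ‖x‖ ‖y‖ with h | h
    · exact ⟨x, Or.inl rfl, le_rfl, h⟩
    · exact ⟨y, Or.inr rfl, h, le_rfl⟩
  have hLz := one_le_log_exp_one_add (norm_nonneg z)
  have hle : ∀ u : Rn n, ‖z‖ ≤ ‖u‖ → |1 / s u - q| ≤ D / Real.log (Real.exp 1 + ‖z‖) := by
    intro u hu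
    refine (hdec u).trans ?_
    gcongr
  have hdiff : 1 / s x - 1 / s y ≤ 2 * D / Real.log (Real.exp 1 + ‖z‖) := by
    have h1 := (abs_le.1 (hle x hzx)).2
    have h2 := (abs_le.1 (hle y hzy)).1
    rw [mul_div_assoc]
    linarith
  have key : decayConst n D ≤ decayWeight n z ^ (1 / s x - 1 / s y) := by
    rw [decayWeight, ← Real.rpow_mul (by positivity), Real.rpow_def_of_pos (by positivity),
      decayConst]
    apply Real.exp_le_exp.2
    rw [le_div_iff₀ (by linarith)] at hdiff
    have : 0 < (n : ℝ) + 1 := by positivity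
    nlinarith
  refine (mul_rpow_le_max ht0 ht1 (Real.exp_nonneg _) hb1 (decayWeight_pos z)
    (decayWeight_le_one z) (by linarith) (by linarith) key).trans (max_le ?_ ?_)
  · linarith
  · have := Real.rpow_nonneg ht0 (s y)
    rcases hz with rfl | rfl <;> linarith

/-- Averages of functions bounded by one under log-Hölder decay. -/
lemma decayConst_mul_setLAverage_rpow_le {n : ℕ} {s : Rn n → ℝ}
    (hs : ∀ x, 1 ≤ s x) {D q : ℝ} (hD : 0 < D)
    (hdec : ∀ x, |1 / s x - q| ≤ D / Real.log (Real.exp 1 + ‖x‖))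
    {F : Rn n → ℝ≥0∞} (hF : Measurable F) (hF1 : ∀ y, F y ≤ 1) (x : Rn n) {R : ℝ} (hR : 0 < R) :
    (ENNReal.ofReal (decayConst n D) * ⨍⁻ y in Metric.closedBall x R, F y ∂volume) ^ s x
      ≤ ⨍⁻ y in Metric.closedBall x R, (F y ^ s y + ENNReal.ofReal (decayWeight n x)
        + ENNReal.ofReal (decayWeight n y)) ∂volume := by
  have h1 : ENNReal.ofReal (decayConst n D) * ⨍⁻ y in Metric.closedBall x R, F y ∂volume
      = ⨍⁻ y in Metric.closedBall x R, ENNReal.ofReal (decayConst n D) * F y ∂volume := by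
    simp_rw [setLAverage_eq, lintegral_const_mul _ hF, mul_div_assoc]
  rw [h1]
  refine (setLAverage_rpow_le (hF.const_mul _) x hR (hs x)).trans ?_
  refine setLAverage_mono_on x R fun y _ => ?_
  have hfin : F y ≠ ⊤ := ne_top_of_le_ne_top ENNReal.one_ne_top (hF1 y)
  have hsx := hs x
  have hsy := hs y
  have hr := decayConst_mul_rpow_le hs hD hdec x y (t := (F y).toReal) ENNReal.toReal_nonneg
    (ENNReal.toReal_le_of_le_ofReal zero_le_one (by simpa using hF1 y))
  have hc0 : 0 ≤ decayConst n D := Real.exp_nonneg _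
  have hx := decayWeight_pos x
  have hy := decayWeight_pos y
  rw [← ENNReal.ofReal_toReal hfin, ← ENNReal.ofReal_mul hc0,
    ENNReal.ofReal_rpow_of_nonneg (by positivity) (by linarith),
    ENNReal.ofReal_rpow_of_nonneg (by positivity) (by linarith),
    ← ENNReal.ofReal_add (by positivity) hx.le, ← ENNReal.ofReal_add (by positivity) hy.le]
  exact ENNReal.ofReal_le_ofReal hr

/-- Pointwise control of the maximal function in variable exponent spaces. -/
lemma mul_dyadicMax_le_rpow {n : ℕ} {s : Rn n → ℝ} (hsm : Measurable s)
    (hs : ∀ x, 1 ≤ s x) {A D q : ℝ} (hA : 0 < A) (hD : 0 < D)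
    (hlog : ∀ x y, x ≠ y → |1 / s x - 1 / s y| ≤ A / Real.log (Real.exp 1 + 1 / ‖x - y‖))
    (hdec : ∀ x, |1 / s x - q| ≤ D / Real.log (Real.exp 1 + ‖x‖))
    {F : Rn n → ℝ≥0∞} (hF : Measurable F) (hint : ∫⁻ y, {y | 1 < F y}.indicator F y ^ s y ≤ 1)
    (x : Rn n) :
    min (ENNReal.ofReal (localConst n A)) (ENNReal.ofReal (decayConst n D)) / 2 * dyadicMax F x
      ≤ (dyadicMax (fun y => F y ^ s y) x + ENNReal.ofReal (decayWeight n x)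
        + dyadicMax (fun y => ENNReal.ofReal (decayWeight n y)) x) ^ (1 / s x) := by
  set G := dyadicMax (fun y => F y ^ s y) x + ENNReal.ofReal (decayWeight n x)
        + dyadicMax (fun y => ENNReal.ofReal (decayWeight n y)) x with hG
  set F₁ := {y | 1 < F y}.indicator F with hF₁
  set F₂ := {y | 1 < F y}ᶜ.indicator F with hF₂
  have hset : MeasurableSet {y | 1 < F y} := measurableSet_lt measurable_const hF
  have hmF₁ : Measurable F₁ := hF.indicator hset
  have hmF₂ : Measurable F₂ := hF.indicator hset.compl
  have hsx : 0 < s x := by linarith [hs x]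
  have hsF : Measurable (fun y => F y ^ s y) := hF.pow hsm
  have hpos : ∀ k : ℤ, (0 : ℝ) < 2 ^ k := fun k => by positivity
  have h₁ : ENNReal.ofReal (localConst n A) * dyadicMax F₁ x ≤ G ^ (1 / s x) := by
    rw [dyadicMax, ENNReal.mul_iSup]
    refine iSup_le fun k => ?_
    refine (localConst_mul_setLAverage_le hs hA hlog hmF₁ (fun y => ?_) hint x (hpos k)).trans ?_
    · by_cases hy : 1 < F y
      · right
        simpa [hF₁, indicator, hy] using hy.le
      · left
        simp [hF₁, hy]
    · refine ENNReal.rpow_le_rpow ?_ (by positivity)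
      refine (setLAverage_mono_on x _ (G := fun y => F y ^ s y) fun y _ => ?_).trans
        ((setLAverage_closedBall_le_dyadicMax _ x k).trans ?_)
      · exact ENNReal.rpow_le_rpow (indicator_le_self _ _ _) (by linarith [hs y])
      · rw [hG, add_assoc]
        exact le_self_add
  have h₂ : ENNReal.ofReal (decayConst n D) * dyadicMax F₂ x ≤ G ^ (1 / s x) := by
    rw [dyadicMax, ENNReal.mul_iSup]
    refine iSup_le fun k => ?_
    rw [one_div, ENNReal.le_rpow_inv_iff hsx]
    refine (decayConst_mul_setLAverage_rpow_le hs hD hdec hmF₂ (fun y => ?_) x (hpos k)).trans ?_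
    · by_cases hy : 1 < F y
      · simp [hF₂, hy]
      · simpa [hF₂, indicator, hy] using not_lt.1 hy
    · refine (setLAverage_mono_on x _ (G := fun y => F y ^ s y + ENNReal.ofReal (decayWeight n x)
        + ENNReal.ofReal (decayWeight n y)) fun y _ => ?_).trans ?_
      · gcongr
        · linarith [hs y]
        · exact indicator_le_self _ _ _
      · refine (setLAverage_closedBall_le_dyadicMax _ x k).trans ?_
        refine (dyadicMax_add_le (hsF.add_const _) _ x).trans ?_
        rw [hG]
        gcongr
        refine (dyadicMax_add_le hsF _ x).trans ?_
        gcongr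
        exact dyadicMax_const_le _ x
  set b := min (ENNReal.ofReal (localConst n A)) (ENNReal.ofReal (decayConst n D)) with hb
  calc b / 2 * dyadicMax F x ≤ b / 2 * (dyadicMax F₁ x + dyadicMax F₂ x) := by
        gcongr
        refine (dyadicMax_mono (fun y => ?_) x).trans (dyadicMax_add_le hmF₁ F₂ x)
        exact (congrFun (indicator_self_add_compl {y | 1 < F y} F) y).ge
    _ = (b * dyadicMax F₁ x) / 2 + (b * dyadicMax F₂ x) / 2 := by
        simp only [div_eq_mul_inv]
        ring
    _ ≤ G ^ (1 / s x) / 2 + G ^ (1 / s x) / 2 := by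
        refine add_le_add (ENNReal.div_le_div_right ?_ _) (ENNReal.div_le_div_right ?_ _)
        · exact le_trans (by gcongr; exact min_le_left _ _) h₁
        · exact le_trans (by gcongr; exact min_le_right _ _) h₂
    _ = G ^ (1 / s x) := ENNReal.add_halves _

/-- Modular boundedness of the maximal function for log-Hölder exponents bounded below by
`m > 1`. -/
theorem exists_lintegral_dyadicMax_div_rpow_le_one {n : ℕ} (hn : 1 ≤ n) {m : ℝ} (hm : 1 < m)
    {p : Rn n → ℝ} (hpm : Measurable p) (hp : ∀ x, m ≤ p x) {A D q : ℝ} (hA : 0 < A) (hD : 0 < D)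
    (hlog : ∀ x y, x ≠ y → |1 / p x - 1 / p y| ≤ A / Real.log (Real.exp 1 + 1 / ‖x - y‖))
    (hdec : ∀ x, |1 / p x - q| ≤ D / Real.log (Real.exp 1 + ‖x‖)) :
    ∃ C : ℝ≥0∞, C ≠ 0 ∧ C ≠ ⊤ ∧ ∀ F : Rn n → ℝ≥0∞, Measurable F → ∫⁻ x, F x ^ p x ≤ 1 →
      ∫⁻ x, (dyadicMax F x / C) ^ p x ≤ 1 := by
  have hm0 : 0 < m := by linarith
  set s : Rn n → ℝ := fun x => p x / m with hsdef
  have hs : ∀ x, 1 ≤ s x := fun x => by rw [hsdef]; exact (one_le_div hm0).2 (hp x)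
  have hsinv : ∀ x, 1 / s x = m * (1 / p x) := fun x => by
    simp only [hsdef, one_div_div]
    ring
  have hsm : Measurable s := hpm.div_const m
  have hlog' : ∀ x y, x ≠ y →
      |1 / s x - 1 / s y| ≤ (m * A) / Real.log (Real.exp 1 + 1 / ‖x - y‖) := by
    intro x y hxy
    rw [hsinv, hsinv, ← mul_sub, abs_mul, abs_of_pos hm0, mul_div_assoc]
    exact mul_le_mul_of_nonneg_left (hlog x y hxy) hm0.le
  have hdec' : ∀ x, |1 / s x - m * q| ≤ (m * D) / Real.log (Real.exp 1 + ‖x‖) := by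
    intro x
    rw [hsinv, ← mul_sub, abs_mul, abs_of_pos hm0, mul_div_assoc]
    exact mul_le_mul_of_nonneg_left (hdec x) hm0.le
  obtain ⟨C, hC, hstrong⟩ := lintegral_dyadicMax_rpow_le hn hm
  set W : Rn n → ℝ≥0∞ := fun x => ENNReal.ofReal (decayWeight n x) with hW
  have hWm : Measurable W := (measurable_decayWeight n).ennreal_ofReal
  have hWint : ∫⁻ x, W x ^ m ≠ ⊤ := by
    refine ne_top_of_le_ne_top (lintegral_decayWeight_ne_top n) (lintegral_mono fun x => ?_)
    have hW1 : W x ≤ 1 := by simpa [hW] using decayWeight_le_one x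
    simpa using ENNReal.rpow_le_rpow_of_exponent_ge hW1 hm.le
  set K : ℝ≥0∞ := 1 + 2 ^ (m - 1) * (2 ^ (m - 1) * (C + ∫⁻ x, W x ^ m) + C * ∫⁻ x, W x ^ m)
    with hK
  have h2t : (2 : ℝ≥0∞) ^ (m - 1) ≠ ⊤ := by finiteness
  have hKt : K ≠ ⊤ := by
    rw [hK]
    finiteness
  have hK1 : 1 ≤ K := le_self_add
  have hK0 : K ≠ 0 := (zero_lt_one.trans_le hK1).ne'
  set b := min (ENNReal.ofReal (localConst n (m * A))) (ENNReal.ofReal (decayConst n (m * D)))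
    with hb
  have hb0 : b ≠ 0 := by
    refine (lt_min ?_ ?_).ne'
    · exact ENNReal.ofReal_pos.2 (Real.exp_pos _)
    · exact ENNReal.ofReal_pos.2 (Real.exp_pos _)
  have hbt : b ≠ ⊤ := ne_top_of_le_ne_top ENNReal.ofReal_ne_top (min_le_left _ _)
  have hb20 : b / 2 ≠ 0 := by simpa using hb0
  have hb2t : b / 2 ≠ ⊤ := ENNReal.div_ne_top hbt two_ne_zero
  refine ⟨K * (b / 2)⁻¹, mul_ne_zero hK0 (by simpa using hb2t),
    ENNReal.mul_ne_top hKt (by simpa using hb20), fun F hF hint => ?_⟩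
  have hsF : Measurable (fun y => F y ^ s y) := hF.pow hsm
  have hint₁ : ∫⁻ y, {y | 1 < F y}.indicator F y ^ s y ≤ 1 := by
    refine (lintegral_mono fun y => ?_).trans hint
    have hy1 := hs y
    have hy2 := hp y
    by_cases hy : 1 < F y
    · simp only [indicator, mem_ofPred_eq, hy, if_true]
      exact ENNReal.rpow_le_rpow_of_exponent_le hy.le (div_le_self (by linarith) hm.le)
    · simp only [indicator, mem_ofPred_eq, hy, if_false]
      rw [ENNReal.zero_rpow_of_pos (by linarith)]
      exact zero_le
  have hpt : ∀ x, (dyadicMax F x / (K * (b / 2)⁻¹)) ^ p x ≤ K⁻¹ *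
      (dyadicMax (fun y => F y ^ s y) x + W x + dyadicMax W x) ^ m := by
    intro x
    have hpx : 1 < p x := hm.trans_le (hp x)
    have hsx := hs x
    have h := mul_dyadicMax_le_rpow hsm hs (mul_pos hm0 hA) (mul_pos hm0 hD) hlog' hdec' hF
      hint₁ x
    have hdiv : dyadicMax F x / (K * (b / 2)⁻¹) = K⁻¹ * (b / 2 * dyadicMax F x) := by
      rw [div_eq_mul_inv, ENNReal.mul_inv (Or.inl hK0) (Or.inl hKt), inv_inv]
      ring
    rw [hdiv, ENNReal.mul_rpow_of_nonneg _ _ (by linarith)]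
    refine mul_le_mul' ?_ ?_
    · simpa using ENNReal.rpow_le_rpow_of_exponent_ge (ENNReal.inv_le_one.2 hK1) hpx.le
    · refine (ENNReal.rpow_le_rpow h (by linarith)).trans_eq ?_
      rw [← ENNReal.rpow_mul]
      congr 1
      simp only [hsdef]
      field_simp
  refine (lintegral_mono hpt).trans ?_
  have hM1 := measurable_dyadicMax hsF
  have hM2 := measurable_dyadicMax hWm
  rw [lintegral_const_mul _ (by fun_prop)]
  have hmain : ∫⁻ x, (dyadicMax (fun y => F y ^ s y) x + W x + dyadicMax W x) ^ m ≤ K := by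
    calc _ ≤ ∫⁻ x, 2 ^ (m - 1) * (2 ^ (m - 1) * (dyadicMax (fun y => F y ^ s y) x ^ m + W x ^ m)
          + dyadicMax W x ^ m) := by
          refine lintegral_mono fun x => (ENNReal.rpow_add_le_mul_rpow_add_rpow _ _ hm.le).trans ?_
          gcongr
          exact ENNReal.rpow_add_le_mul_rpow_add_rpow _ _ hm.le
      _ = 2 ^ (m - 1) * (2 ^ (m - 1) * ((∫⁻ x, dyadicMax (fun y => F y ^ s y) x ^ m)
          + ∫⁻ x, W x ^ m) + ∫⁻ x, dyadicMax W x ^ m) := by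
          rw [lintegral_const_mul _ (by fun_prop), lintegral_add_left (by fun_prop),
            lintegral_const_mul _ (by fun_prop), lintegral_add_left (by fun_prop)]
      _ ≤ 2 ^ (m - 1) * (2 ^ (m - 1) * (C * 1 + ∫⁻ x, W x ^ m) + C * ∫⁻ x, W x ^ m) := by
          gcongr
          · refine (hstrong _ hsF).trans ?_
            gcongr
            refine le_trans (le_of_eq ?_) hint
            refine lintegral_congr fun x => ?_
            rw [← ENNReal.rpow_mul, hsdef]
            congr 1
            field_simp
          · exact hstrong _ hWm
      _ ≤ K := by
          rw [mul_one, hK]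
          exact le_add_self
  calc _ ≤ K⁻¹ * K := by gcongr
    _ = 1 := ENNReal.inv_mul_cancel hK0 hKt

lemma volume_ball_eq_volume_closedBall {n : ℕ} (hn : 1 ≤ n) (x : Rn n) (R : ℝ) :
    volume (Metric.ball x R) = volume (Metric.closedBall x R) := by
  have : Nonempty (Fin n) := ⟨⟨0, hn⟩⟩
  exact (Measure.addHaar_closedBall_eq_addHaar_ball volume x R).symm

lemma setLIntegral_ball_le_dyadicMax {n : ℕ} (hn : 1 ≤ n) (F : Rn n → ℝ≥0∞) (x : Rn n) (R : ℝ) :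
    ∫⁻ y in Metric.ball x R, F y
      ≤ 2 ^ n * dyadicMax F x * volume (Metric.ball x R) := by
  rcases le_or_gt R 0 with hR | hR
  · simp [Metric.ball_eq_empty.2 hR]
  obtain ⟨k, hk1, hk2⟩ := exists_mem_Ioc_zpow hR (one_lt_two (α := ℝ))
  have hk0 : (0:ℝ) < 2 ^ (k + 1) := by positivity
  have hvol : volume (Metric.closedBall x ((2:ℝ) ^ (k + 1)))
      ≤ 2 ^ n * volume (Metric.ball x R) := by
    rw [volume_ball_eq_volume_closedBall hn, volume_closedBall_rn x hk0.le,
      volume_closedBall_rn x hR.le, ← mul_assoc]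
    gcongr
    rw [show (2 : ℝ≥0∞) ^ n = ENNReal.ofReal (2 ^ n) by
      rw [ENNReal.ofReal_pow (by norm_num)]; norm_num, ← ENNReal.ofReal_mul (by positivity)]
    apply ENNReal.ofReal_le_ofReal
    rw [← mul_pow]
    gcongr
    rw [zpow_add₀ (by norm_num)]
    linarith
  have h0 : volume (Metric.closedBall x ((2:ℝ) ^ (k + 1))) ≠ 0 :=
    (Metric.measure_closedBall_pos _ _ hk0).ne'
  have h1 : volume (Metric.closedBall x ((2:ℝ) ^ (k + 1))) ≠ ⊤ :=
    measure_closedBall_lt_top.ne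
  calc ∫⁻ y in Metric.ball x R, F y
      ≤ ∫⁻ y in Metric.closedBall x ((2:ℝ) ^ (k + 1)), F y :=
        lintegral_mono_set (Metric.ball_subset_closedBall.trans
          (Metric.closedBall_subset_closedBall hk2))
    _ = (⨍⁻ y in Metric.closedBall x ((2:ℝ) ^ (k + 1)), F y ∂volume)
          * volume (Metric.closedBall x ((2:ℝ) ^ (k + 1))) := by
        rw [setLAverage_eq, ENNReal.div_mul_cancel h0 h1]
    _ ≤ dyadicMax F x * (2 ^ n * volume (Metric.ball x R)) := by
        gcongr
        exact setLAverage_closedBall_le_dyadicMax F x _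
    _ = _ := by ring

lemma lintegral_gaussian_mul_le_dyadicMax {n : ℕ} (hn : 1 ≤ n) {F : Rn n → ℝ≥0∞} (hF : Measurable F)
    {K c : ℝ} (hK : 0 < K) (hc : 0 < c) (x : Rn n) :
    ∫⁻ y, ENNReal.ofReal (K * Real.exp (-c * ‖x - y‖ ^ 2)) * F y
      ≤ 2 ^ n * dyadicMax F x * ∫⁻ y : Rn n, ENNReal.ofReal (K * Real.exp (-c * ‖y‖ ^ 2)) := by
  set h : Rn n → ℝ := fun y => K * Real.exp (-c * ‖x - y‖ ^ 2) with hh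
  have hcont : Continuous h := by fun_prop
  have hpos : ∀ y, 0 ≤ h y := fun y => by positivity
  have hset : ∀ t ∈ Ioi (0:ℝ), {y | t < h y} = Metric.ball x (√(Real.log (K / t) / c)) := by
    intro t ht
    have ht : 0 < t := ht
    ext y
    rw [mem_ofPred_eq, mem_ball_iff_norm', Real.lt_sqrt (norm_nonneg _), lt_div_iff₀ hc,
      Real.lt_log_iff_exp_lt (by positivity), lt_div_iff₀ ht, hh]
    simp only
    rw [neg_mul, Real.exp_neg, ← div_eq_mul_inv, lt_div_iff₀ (Real.exp_pos _),
      mul_comm t, mul_comm c]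
  have e1 : ∫⁻ y, ENNReal.ofReal (h y) * F y
      = ∫⁻ t in Ioi (0:ℝ), ∫⁻ y in Metric.ball x (√(Real.log (K / t) / c)), F y := by
    have := lintegral_withDensity_eq_lintegral_mul (volume : Measure (Rn n)) hF
      (hcont.measurable.ennreal_ofReal)
    rw [lintegral_eq_lintegral_meas_lt _ (ae_of_all _ hpos) hcont.measurable.aemeasurable] at this
    rw [lintegral_congr (fun y => mul_comm (ENNReal.ofReal (h y)) (F y))]
    refine Eq.trans this.symm (setLIntegral_congr_fun measurableSet_Ioi fun t ht => ?_)
    rw [hset t ht, withDensity_apply _ measurableSet_ball]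
  have e2 : ∫⁻ y : Rn n, ENNReal.ofReal (K * Real.exp (-c * ‖y‖ ^ 2))
      = ∫⁻ t in Ioi (0:ℝ), volume (Metric.ball x (√(Real.log (K / t) / c))) := by
    rw [← lintegral_sub_left_eq_self (μ := (volume : Measure (Rn n))) _ x]
    rw [lintegral_eq_lintegral_meas_lt _ (ae_of_all _ hpos) hcont.measurable.aemeasurable]
    refine setLIntegral_congr_fun measurableSet_Ioi fun t ht => ?_
    rw [hset t ht]
  rw [e1, e2]
  have hm : Measurable fun t : ℝ => volume (Metric.ball x (√(Real.log (K / t) / c))) := by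
    have : (fun t : ℝ => volume (Metric.ball x (√(Real.log (K / t) / c))))
        = fun t : ℝ => ENNReal.ofReal ((√(Real.log (K / t) / c)) ^ n)
          * volume (Metric.ball (0 : Rn n) 1) := by
      ext t
      rw [← volume_closedBall_rn x (Real.sqrt_nonneg _), volume_ball_eq_volume_closedBall hn]
    rw [this]
    fun_prop
  rw [← lintegral_const_mul _ hm]
  exact lintegral_mono fun t => setLIntegral_ball_le_dyadicMax hn F x _

/-- The real part of the inverse Fourier transform of a real multiplier. -/
def multKer {n : ℕ} (m : Rn n → ℝ) (z : Rn n) : ℝ := (𝓕⁻ (fun ξ : Rn n => (m ξ : ℂ)) z).re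

lemma multKer_gaussian {n : ℕ} {s : ℝ} (hs : 0 < s) (z : Rn n) :
    multKer (fun ξ : Rn n => Real.exp (-s * ‖ξ‖ ^ 2)) z
      = (Real.pi / s) ^ ((n : ℝ) / 2) * Real.exp (-(Real.pi ^ 2 / s) * ‖z‖ ^ 2) := by
  have hfun : (fun ξ : Rn n => ((Real.exp (-s * ‖ξ‖ ^ 2) : ℝ) : ℂ))
      = fun v : Rn n => Complex.exp (-(s:ℂ) * (‖v‖ : ℂ) ^ 2) := by
    ext ξ; push_cast; rfl
  rw [multKer, hfun, Real.fourierInv_eq_fourier_neg,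
    fourier_gaussian_innerProductSpace (by simpa using hs)]
  have : ((Real.pi : ℂ) / (s:ℂ)) ^ ((Module.finrank ℝ (Rn n) : ℂ) / 2)
      * Complex.exp (-(Real.pi:ℂ) ^ 2 * (‖-z‖ : ℂ) ^ 2 / (s:ℂ))
      = (((Real.pi / s) ^ ((n : ℝ) / 2) * Real.exp (-(Real.pi ^ 2 / s) * ‖z‖ ^ 2) : ℝ) : ℂ) := by
    rw [Complex.ofReal_mul, Complex.ofReal_cpow (by positivity)]
    congr 1
    · simp
    · rw [norm_neg]; push_cast; congr 1; ring
  rw [this, Complex.ofReal_re]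

lemma integrable_exp_neg_mul_norm_sq {n : ℕ} {s : ℝ} (hs : 0 < s) :
    Integrable fun ξ : Rn n => Real.exp (-s * ‖ξ‖ ^ 2) := by
  have h := GaussianFourier.integral_rexp_neg_mul_sq_norm (V := Rn n) hs
  by_contra hcon
  rw [integral_undef hcon] at h
  have : 0 < (Real.pi / s) ^ ((Module.finrank ℝ (Rn n) : ℝ) / 2) := by positivity
  linarith

lemma lintegral_gaussian_kernel {n : ℕ} {s : ℝ} (hs : 0 < s) :
    ∫⁻ y : Rn n, ENNReal.ofReal
      ((Real.pi / s) ^ ((n : ℝ) / 2) * Real.exp (-(Real.pi ^ 2 / s) * ‖y‖ ^ 2)) = 1 := by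
  have hb : 0 < Real.pi ^ 2 / s := by positivity
  have h := GaussianFourier.integral_rexp_neg_mul_sq_norm (V := Rn n) hb
  have hi := integrable_exp_neg_mul_norm_sq (n := n) hb
  rw [← ofReal_integral_eq_lintegral_ofReal (hi.const_mul _)
    (ae_of_all _ fun y => by positivity), integral_const_mul, h]
  rw [finrank_euclideanSpace_fin, ← Real.mul_rpow (by positivity) (by positivity)]
  have : Real.pi / s * (Real.pi / (Real.pi ^ 2 / s)) = 1 := by field_simp
  simp [this]

lemma multKer_eq_integral_cos {n : ℕ} {m : Rn n → ℝ} (hm : Integrable m) (z : Rn n) :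
    multKer m z = ∫ ξ, Real.cos (2 * Real.pi * inner ℝ ξ z) * m ξ := by
  have hint : Integrable fun ξ : Rn n =>
      Complex.exp ((↑(2 * Real.pi * inner ℝ ξ z) : ℂ) * Complex.I) • (m ξ : ℂ) := by
    refine (hm.ofReal (𝕜 := ℂ)).bdd_mul (c := 1) ?_ (ae_of_all _ fun ξ => ?_)
    · exact Continuous.aestronglyMeasurable (by fun_prop)
    · rw [Complex.norm_exp_ofReal_mul_I]
  rw [multKer, Real.fourierInv_eq']
  have h := Complex.reCLM.integral_comp_comm hint
  simp only [Complex.reCLM_apply] at h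
  rw [← h]
  refine integral_congr_ae (ae_of_all _ fun ξ => ?_)
  simp only [smul_eq_mul]
  rw [Complex.re_mul_ofReal, Complex.exp_ofReal_mul_I_re]

/-- The kernel of the multiplier `m` is nonnegative and convolution of `F` with it is controlled by
the dyadic maximal function of `F`. -/
structure MaxDominated {n : ℕ} (F : Rn n → ℝ≥0∞) (m : Rn n → ℝ) : Prop where
  integrable : Integrable m
  measurable_multKer : Measurable (multKer m)
  nonneg : ∀ z, 0 ≤ multKer m z
  lintegral_le : ∀ x, ∫⁻ y, ENNReal.ofReal (multKer m (x - y)) * F y ≤ 2 ^ n * dyadicMax F x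

lemma MaxDominated.of_tendsto {n : ℕ} {F : Rn n → ℝ≥0∞} (hF : Measurable F) (hF' : ∀ y, F y ≠ ⊤)
    {m : ℕ → Rn n → ℝ} {g m' : Rn n → ℝ} (hm : ∀ k, MaxDominated F (m k)) (hg : Integrable g)
    (hbound : ∀ k ξ, |m k ξ| ≤ g ξ)
    (hlim : ∀ᵐ ξ, Filter.Tendsto (fun k => m k ξ) Filter.atTop (nhds (m' ξ))) :
    MaxDominated F m' := by
  have hm' : Integrable m' := by
    refine hg.mono' (aestronglyMeasurable_of_tendsto_ae Filter.atTop
      (fun k => (hm k).integrable.aestronglyMeasurable) hlim) ?_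
    filter_upwards [hlim] with ξ hξ
    exact le_of_tendsto hξ.abs (Filter.Eventually.of_forall fun k => hbound k ξ)
  have hker : ∀ z, Filter.Tendsto (fun k => multKer (m k) z) Filter.atTop
      (nhds (multKer m' z)) := by
    intro z
    rw [multKer_eq_integral_cos hm']
    simp_rw [multKer_eq_integral_cos (hm _).integrable]
    refine tendsto_integral_of_dominated_convergence g (fun k => ?_) hg (fun k => ?_) ?_
    · exact (Continuous.aestronglyMeasurable (by fun_prop)).mul
        (hm k).integrable.aestronglyMeasurable
    · refine ae_of_all _ fun ξ => ?_
      rw [norm_mul, Real.norm_eq_abs, Real.norm_eq_abs]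
      calc _ ≤ 1 * |m k ξ| := by gcongr; exact Real.abs_cos_le_one _
        _ ≤ g ξ := by rw [one_mul]; exact hbound k ξ
    · filter_upwards [hlim] with ξ hξ
      exact hξ.const_mul _
  refine ⟨hm', measurable_of_tendsto_metrizable (fun k => (hm k).measurable_multKer)
    (tendsto_pi_nhds.2 hker), fun z => ge_of_tendsto' (hker z) fun k => (hm k).nonneg z,
    fun x => ?_⟩
  have hlim2 : ∀ y, Filter.liminf (fun k => ENNReal.ofReal (multKer (m k) (x - y)) * F y)
      Filter.atTop = ENNReal.ofReal (multKer m' (x - y)) * F y := fun y =>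
    (ENNReal.Tendsto.mul_const (ENNReal.tendsto_ofReal (hker _)) (Or.inr (hF' y))).liminf_eq
  simp_rw [← hlim2]
  refine (lintegral_liminf_le fun k => ?_).trans ?_
  · exact ((hm k).measurable_multKer.comp (measurable_const.sub measurable_id)).ennreal_ofReal.mul
      hF
  · exact Filter.liminf_le_of_le (by isBoundedDefault) fun b hb => by
      obtain ⟨k, hk⟩ := hb.exists
      exact hk.trans ((hm k).lintegral_le x)

lemma maxDominated_sum_gaussian {n : ℕ} (hn : 1 ≤ n) {F : Rn n → ℝ≥0∞} (hF : Measurable F)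
    (I : Finset ℕ) (c s : ℕ → ℝ) (hc : ∀ k, 0 ≤ c k) (hs : ∀ k, 0 < s k)
    (hsum : ∑ k ∈ I, c k ≤ 1) :
    MaxDominated F (fun ξ => ∑ k ∈ I, c k * Real.exp (-s k * ‖ξ‖ ^ 2)) := by
  have hgi : ∀ k, Integrable fun ξ : Rn n => Real.exp (-s k * ‖ξ‖ ^ 2) :=
    fun k => integrable_exp_neg_mul_norm_sq (hs k)
  have hint : Integrable (fun ξ : Rn n => ∑ k ∈ I, c k * Real.exp (-s k * ‖ξ‖ ^ 2)) :=
    integrable_finsetSum _ fun k _ => (hgi k).const_mul _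
  have hker : multKer (fun ξ : Rn n => ∑ k ∈ I, c k * Real.exp (-s k * ‖ξ‖ ^ 2))
      = fun z => ∑ k ∈ I, c k * ((Real.pi / s k) ^ ((n : ℝ) / 2)
        * Real.exp (-(Real.pi ^ 2 / s k) * ‖z‖ ^ 2)) := by
    ext z
    rw [multKer_eq_integral_cos hint]
    simp_rw [← multKer_gaussian (hs _), multKer_eq_integral_cos (hgi _), Finset.mul_sum]
    rw [integral_finsetSum]
    · refine Finset.sum_congr rfl fun k _ => ?_
      rw [← integral_const_mul]
      exact integral_congr_ae (ae_of_all _ fun ξ => by ring)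
    · intro k _
      refine ((hgi k).const_mul _).bdd_mul (c := 1)
        (Continuous.aestronglyMeasurable (by fun_prop)) (ae_of_all _ fun ξ => ?_)
      exact Real.abs_cos_le_one _
  have hpos : ∀ k, ∀ z : Rn n, 0 ≤ (Real.pi / s k) ^ ((n : ℝ) / 2)
        * Real.exp (-(Real.pi ^ 2 / s k) * ‖z‖ ^ 2) := fun k z => by
    have := hs k; positivity
  refine ⟨hint, ?_, fun z => ?_, fun x => ?_⟩
  · rw [hker]; fun_prop
  · rw [hker]; exact Finset.sum_nonneg fun k _ => mul_nonneg (hc k) (hpos k z)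
  · rw [hker]
    have : ∀ y, ENNReal.ofReal (∑ k ∈ I, c k * ((Real.pi / s k) ^ ((n : ℝ) / 2)
        * Real.exp (-(Real.pi ^ 2 / s k) * ‖x - y‖ ^ 2))) * F y
        = ∑ k ∈ I, ENNReal.ofReal (c k) * (ENNReal.ofReal ((Real.pi / s k) ^ ((n : ℝ) / 2)
        * Real.exp (-(Real.pi ^ 2 / s k) * ‖x - y‖ ^ 2)) * F y) := by
      intro y
      rw [ENNReal.ofReal_sum_of_nonneg fun k _ => mul_nonneg (hc k) (hpos k _), Finset.sum_mul]
      refine Finset.sum_congr rfl fun k _ => ?_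
      rw [ENNReal.ofReal_mul (hc k), mul_assoc]
    simp_rw [this]
    rw [lintegral_finsetSum _ fun k _ => by fun_prop]
    calc _ ≤ ∑ k ∈ I, ENNReal.ofReal (c k) * (2 ^ n * dyadicMax F x) := by
          refine Finset.sum_le_sum fun k _ => ?_
          rw [lintegral_const_mul _ (by fun_prop)]
          gcongr
          have hk := hs k
          refine (lintegral_gaussian_mul_le_dyadicMax hn hF (by positivity)
            (by positivity) x).trans ?_
          rw [lintegral_gaussian_kernel hk, mul_one]
      _ = ENNReal.ofReal (∑ k ∈ I, c k) * (2 ^ n * dyadicMax F x) := by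
          rw [ENNReal.ofReal_sum_of_nonneg fun k _ => hc k, Finset.sum_mul]
      _ ≤ 1 * (2 ^ n * dyadicMax F x) := by
          gcongr
          exact ENNReal.ofReal_le_one.2 hsum
      _ = _ := one_mul _

lemma Ring.choose_succ_mul_succ (a : ℝ) (k : ℕ) :
    Ring.choose a (k + 1) * (k + 1) = Ring.choose a k * (a - k) := by
  have h1 := Ring.descPochhammer_eq_factorial_smul_choose a k
  have h2 := Ring.descPochhammer_eq_factorial_smul_choose a (k + 1)
  rw [descPochhammer_succ_right, Polynomial.smeval_mul, h1] at h2
  simp only [Polynomial.smeval_sub, Polynomial.smeval_X, Polynomial.smeval_natCast, pow_zero,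
    pow_one, nsmul_eq_mul, mul_one, Nat.factorial_succ, Nat.cast_mul, Nat.cast_add,
    Nat.cast_one] at h2
  have h3 : (k.factorial : ℝ) ≠ 0 := by exact_mod_cast k.factorial_ne_zero
  apply mul_left_cancel₀ h3
  linear_combination -h2

/-- The power series of `1 - (1 - x) ^ α` has nonnegative coefficients whose sum is at most one. -/
lemma exists_hasSum_one_sub_one_sub_rpow {α : ℝ} (hα : 0 < α) (hα1 : α ≤ 1) :
    ∃ a : ℕ → ℝ, (∀ k, 0 ≤ a k) ∧ (∀ K, ∑ k ∈ Finset.range K, a k ≤ 1) ∧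
      ∀ x ∈ Ico (0:ℝ) 1, HasSum (fun k => a k * x ^ k) (1 - (1 - x) ^ α) := by
  set c : ℕ → ℝ := fun k => (-1) ^ k * Ring.choose α k with hc
  have hc0 : c 0 = 1 := by simp [hc]
  have hneg : ∀ k, c (k + 1) ≤ 0 := by
    intro k
    induction k with
    | zero => simp [hc, hα.le]
    | succ k ih =>
      have h := Ring.choose_succ_mul_succ α (k + 1)
      have h' : c (k + 1 + 1) * ((k:ℝ) + 2) = c (k + 1) * ((k:ℝ) + 1 - α) := by
        simp only [hc]
        push_cast at h
        rw [pow_succ]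
        linear_combination (-1) ^ (k + 1 + 1) * h
      have h2 : c (k + 1) * ((k:ℝ) + 1 - α) ≤ 0 :=
        mul_nonpos_of_nonpos_of_nonneg ih (by have := k.cast_nonneg (α := ℝ); linarith)
      have hk : (0:ℝ) < (k:ℝ) + 2 := by positivity
      by_contra hcon
      push Not at hcon
      have := mul_pos hcon hk
      linarith
  have hsum : ∀ x ∈ Ico (0:ℝ) 1, HasSum (fun k => c k * x ^ k) ((1 - x) ^ α) := by
    intro x hx
    have h := (Real.one_add_rpow_hasFPowerSeriesOnBall_zero (a := α)).hasSum (y := -x) (by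
      rw [← ENNReal.ofReal_one, Metric.eball_ofReal]
      simpa [abs_of_nonneg hx.1] using hx.2)
    simp only [binomialSeries_apply, List.ofFn_const, List.prod_replicate, smul_eq_mul,
      zero_add] at h
    rw [← sub_eq_add_neg] at h
    refine h.congr_fun ?_
    intro k
    simp only [hc]
    rw [neg_pow]; ring
  set a : ℕ → ℝ := fun k => if k = 0 then 0 else -c k with ha
  have ha0 : ∀ k, 0 ≤ a k := by
    intro k
    rcases k with _ | k
    · simp [ha]
    · simpa [ha] using hneg k
  have hasum : ∀ x ∈ Ico (0:ℝ) 1, HasSum (fun k => a k * x ^ k) (1 - (1 - x) ^ α) := by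
    intro x hx
    have h1 : HasSum (fun k : ℕ => if k = 0 then (1:ℝ) else 0) 1 := by
      simpa using hasSum_ite_eq (0:ℕ) (1:ℝ)
    refine (h1.sub (hsum x hx)).congr_fun ?_
    intro k
    rcases k with _ | k
    · simp [ha, hc0]
    · simp [ha]
  refine ⟨a, ha0, fun K => ?_, hasum⟩
  have hle : ∀ x ∈ Ico (0:ℝ) 1, ∑ k ∈ Finset.range K, a k * x ^ k ≤ 1 := by
    intro x hx
    have := sum_le_hasSum (Finset.range K)
      (fun k _ => mul_nonneg (ha0 k) (pow_nonneg hx.1 k)) (hasum x hx)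
    have h2 : 0 ≤ (1 - x) ^ α := Real.rpow_nonneg (by linarith [hx.2]) _
    linarith
  have hcont : Continuous fun x : ℝ => ∑ k ∈ Finset.range K, a k * x ^ k := by fun_prop
  have hlim : Filter.Tendsto (fun x : ℝ => ∑ k ∈ Finset.range K, a k * x ^ k)
      (nhdsWithin 1 (Iio 1)) (nhds (∑ k ∈ Finset.range K, a k)) := by
    have := (hcont.tendsto 1).mono_left (nhdsWithin_le_nhds (s := Iio 1))
    simpa using this
  refine le_of_tendsto hlim ?_
  filter_upwards [Ico_mem_nhdsLT (show (0:ℝ) < 1 by norm_num)] with x hx using hle x hx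

open Polynomial in
lemma coeff_pow_nonneg {P : ℝ[X]} (hP : ∀ k, 0 ≤ P.coeff k) (m k : ℕ) :
    0 ≤ (P ^ m).coeff k := by
  induction m generalizing k with
  | zero => rw [pow_zero, coeff_one]; split_ifs <;> norm_num
  | succ m ih =>
    rw [pow_succ, coeff_mul]
    exact Finset.sum_nonneg fun ij _ => mul_nonneg (ih _) (hP _)

/-- Polynomials with nonnegative coefficients approximating `x ↦ exp (-T (1 - x) ^ α)`. -/
lemma exists_polynomial_tendsto_exp {α : ℝ} (hα : 0 < α) (hα1 : α ≤ 1) {T : ℝ} (hT : 0 ≤ T) :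
    ∃ P : ℕ → Polynomial ℝ, (∀ m k, 0 ≤ (P m).coeff k) ∧ (∀ m, (P m).eval 1 ≤ 1) ∧
      ∀ x ∈ Ico (0:ℝ) 1, Filter.Tendsto (fun m => (P m).eval x) Filter.atTop
        (nhds (Real.exp (-(T * (1 - x) ^ α)))) := by
  obtain ⟨a, ha0, ha1, hasum⟩ := exists_hasSum_one_sub_one_sub_rpow hα hα1
  set L : ℕ → ℕ := fun m => m + (⌈T⌉₊ + 1) with hL
  have hLT : ∀ m, T ≤ (L m : ℝ) := fun m => (Nat.le_ceil T).trans (by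
    exact_mod_cast (by simp only [hL]; omega))
  have hL0 : ∀ m, (0:ℝ) < L m := fun m => by
    exact_mod_cast (by simp only [hL]; omega)
  set Ψ : ℕ → Polynomial ℝ := fun m =>
    ∑ k ∈ Finset.range m, Polynomial.C (a k) * Polynomial.X ^ k with hΨ
  have hΨc : ∀ m k, 0 ≤ (Ψ m).coeff k := by
    intro m k
    simp only [hΨ, Polynomial.finsetSum_coeff, Polynomial.coeff_C_mul, Polynomial.coeff_X_pow]
    refine Finset.sum_nonneg fun i _ => mul_nonneg (ha0 i) ?_
    split_ifs <;> norm_num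
  have hΨe : ∀ m x, (Ψ m).eval x = ∑ k ∈ Finset.range m, a k * x ^ k := by
    intro m x
    simp [hΨ, Polynomial.eval_finsetSum]
  set B : ℕ → Polynomial ℝ := fun M =>
    Polynomial.C (1 - T / M) + Polynomial.C (T / M) * Ψ M with hB
  have hBe : ∀ M x, (B M).eval x = 1 + T * ((Ψ M).eval x - 1) / M := by
    intro M x
    simp only [hB, Polynomial.eval_add, Polynomial.eval_C, Polynomial.eval_mul]
    ring
  have hBc : ∀ m k, 0 ≤ (B (L m)).coeff k := by
    intro m k
    have h1 : T / L m ≤ 1 := (div_le_one (hL0 m)).2 (hLT m)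
    simp only [hB, Polynomial.coeff_add, Polynomial.coeff_C_mul, Polynomial.coeff_C]
    refine add_nonneg ?_ (mul_nonneg (div_nonneg hT (hL0 m).le) (hΨc _ _))
    split_ifs
    · linarith
    · exact le_rfl
  refine ⟨fun m => B (L m) ^ L m, fun m k => coeff_pow_nonneg (hBc m) _ _, fun m => ?_,
    fun x hx => ?_⟩
  · rw [Polynomial.eval_pow]
    have h1 : T / L m ≤ 1 := (div_le_one (hL0 m)).2 (hLT m)
    have h0 : 0 ≤ T / L m := div_nonneg hT (hL0 m).le
    have h2 : (Ψ (L m)).eval 1 ≤ 1 := by rw [hΨe]; simpa using ha1 (L m)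
    have h3 : 0 ≤ (Ψ (L m)).eval 1 := by
      rw [hΨe]; exact Finset.sum_nonneg fun k _ => by simpa using ha0 k
    have h4 : (B (L m)).eval 1 = (1 - T / L m) + T / L m * (Ψ (L m)).eval 1 := by
      rw [hBe]; ring
    have h5 := mul_nonneg h0 h3
    have h6 := mul_le_mul_of_nonneg_left h2 h0
    apply pow_le_one₀ <;> rw [h4] <;> linarith
  · have hΨlim : Filter.Tendsto (fun M => (Ψ M).eval x) Filter.atTop
        (nhds (1 - (1 - x) ^ α)) := by
      simp_rw [hΨe]
      exact (hasum x hx).tendsto_sum_nat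
    have hg : Filter.Tendsto (fun M : ℕ => (M:ℝ) * (T * ((Ψ M).eval x - 1) / M)) Filter.atTop
        (nhds (-(T * (1 - x) ^ α))) := by
      have h1 : Filter.Tendsto (fun M => T * ((Ψ M).eval x - 1)) Filter.atTop
          (nhds (-(T * (1 - x) ^ α))) := by
        have := (hΨlim.sub_const 1).const_mul T
        convert this using 2
        ring
      refine h1.congr' ?_
      filter_upwards [Filter.eventually_gt_atTop 0] with M hM
      have : (M:ℝ) ≠ 0 := by exact_mod_cast hM.ne'
      field_simp
    have h := (Real.tendsto_one_add_pow_exp_of_tendsto hg).comp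
      (Filter.tendsto_add_atTop_nat (⌈T⌉₊ + 1))
    refine h.congr fun m => ?_
    simp only [Function.comp_apply, Polynomial.eval_pow, hBe, hL]

lemma maxDominated_gaussian_mul_eval {n : ℕ} (hn : 1 ≤ n) {F : Rn n → ℝ≥0∞} (hF : Measurable F)
    {P : Polynomial ℝ} (hP : ∀ k, 0 ≤ P.coeff k) (hP1 : P.eval 1 ≤ 1) {ε N : ℝ} (hε : 0 < ε)
    (hN : 0 < N) :
    MaxDominated F (fun ξ : Rn n =>
      Real.exp (-ε * ‖ξ‖ ^ 2) * P.eval (Real.exp (-(‖ξ‖ ^ 2 / N)))) := by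
  have h := maxDominated_sum_gaussian hn hF (Finset.range (P.natDegree + 1)) P.coeff
    (fun k => ε + k / N) hP (fun k => by positivity) (by
      rw [Polynomial.eval_eq_sum_range] at hP1
      simpa using hP1)
  convert h using 2 with ξ
  rw [Polynomial.eval_eq_sum_range, Finset.mul_sum]
  refine Finset.sum_congr rfl fun k _ => ?_
  rw [← Real.exp_nat_mul, mul_left_comm, ← Real.exp_add]
  congr 2
  ring

lemma abs_eval_le_one {P : Polynomial ℝ} (hP : ∀ k, 0 ≤ P.coeff k) (hP1 : P.eval 1 ≤ 1) {x : ℝ}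
    (hx : 0 ≤ x) (hx1 : x ≤ 1) : |P.eval x| ≤ 1 := by
  rw [abs_of_nonneg]
  · refine le_trans ?_ hP1
    rw [Polynomial.eval_eq_sum_range, Polynomial.eval_eq_sum_range]
    gcongr with k _
    · exact hP k
  · rw [Polynomial.eval_eq_sum_range]
    exact Finset.sum_nonneg fun k _ => mul_nonneg (hP k) (pow_nonneg hx k)

lemma ae_ne_zero_rn {n : ℕ} (hn : 1 ≤ n) : ∀ᵐ ξ : Rn n, ξ ≠ 0 := by
  have : Nonempty (Fin n) := ⟨⟨0, hn⟩⟩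
  exact Measure.ae_ne volume 0

lemma maxDominated_gaussian_mul_exp_one_sub {n : ℕ} (hn : 1 ≤ n) {F : Rn n → ℝ≥0∞}
    (hF : Measurable F) (hF' : ∀ y, F y ≠ ⊤) {α T ε N : ℝ} (hα : 0 < α) (hα1 : α ≤ 1)
    (hT : 0 ≤ T) (hε : 0 < ε) (hN : 0 < N) :
    MaxDominated F (fun ξ : Rn n => Real.exp (-ε * ‖ξ‖ ^ 2)
      * Real.exp (-(T * (1 - Real.exp (-(‖ξ‖ ^ 2 / N))) ^ α))) := by
  obtain ⟨P, hP, hP1, hlim⟩ := exists_polynomial_tendsto_exp hα hα1 hT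
  refine MaxDominated.of_tendsto hF hF'
    (fun m => maxDominated_gaussian_mul_eval hn hF (hP m) (hP1 m) hε hN)
    (integrable_exp_neg_mul_norm_sq hε) (fun m ξ => ?_) ?_
  · rw [abs_mul, abs_of_pos (Real.exp_pos _)]
    refine mul_le_of_le_one_right (Real.exp_pos _).le
      (abs_eval_le_one (hP m) (hP1 m) (Real.exp_pos _).le (Real.exp_le_one_iff.2 ?_))
    have : 0 ≤ ‖ξ‖ ^ 2 / N := by positivity
    linarith
  · filter_upwards [ae_ne_zero_rn hn] with ξ hξ
    refine (hlim _ ⟨(Real.exp_pos _).le, Real.exp_lt_one_iff.2 ?_⟩).const_mul _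
    have : 0 < ‖ξ‖ ^ 2 / N := by have := norm_pos_iff.2 hξ; positivity
    linarith

lemma tendsto_mul_one_sub_exp_neg_div (y : ℝ) (hy : 0 ≤ y) :
    Filter.Tendsto (fun N : ℕ => ((N : ℝ) + 1) * (1 - Real.exp (-(y / ((N:ℝ) + 1)))))
      Filter.atTop (nhds y) := by
  have hl : Filter.Tendsto (fun N : ℕ => y / (1 + y * (1 / ((N:ℝ) + 1)))) Filter.atTop
      (nhds y) := by
    have h := (tendsto_one_div_add_atTop_nhds_zero_nat (𝕜 := ℝ)).const_mul y
    have h2 := (tendsto_const_nhds (x := y)).div (h.const_add 1) (by simp)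
    simpa [Pi.div_def] using h2
  refine tendsto_of_tendsto_of_tendsto_of_le_of_le hl tendsto_const_nhds ?_ ?_
  · intro N
    have hN : (0:ℝ) < (N:ℝ) + 1 := by positivity
    have hu : 0 ≤ y / ((N:ℝ) + 1) := by positivity
    have h1 : Real.exp (-(y / ((N:ℝ) + 1))) ≤ 1 / (1 + y / ((N:ℝ) + 1)) := by
      rw [Real.exp_neg, ← one_div]
      apply one_div_le_one_div_of_le (by positivity)
      linarith [Real.add_one_le_exp (y / ((N:ℝ) + 1))]
    have h2 : y / (1 + y * (1 / ((N:ℝ) + 1)))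
        = ((N : ℝ) + 1) * (1 - 1 / (1 + y / ((N:ℝ) + 1))) := by
      field_simp
      ring
    simp only
    rw [h2]
    gcongr
  · intro N
    have hN : (0:ℝ) < (N:ℝ) + 1 := by positivity
    have h1 := Real.add_one_le_exp (-(y / ((N:ℝ) + 1)))
    calc ((N : ℝ) + 1) * (1 - Real.exp (-(y / ((N:ℝ) + 1))))
        ≤ ((N : ℝ) + 1) * (y / ((N:ℝ) + 1)) := by gcongr; linarith
      _ = y := by field_simp

lemma maxDominated_gaussian_mul_exp_rpow {n : ℕ} (hn : 1 ≤ n) {F : Rn n → ℝ≥0∞}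
    (hF : Measurable F) (hF' : ∀ y, F y ≠ ⊤) {α t ε : ℝ} (hα : 0 < α) (hα1 : α ≤ 1)
    (ht : 0 ≤ t) (hε : 0 < ε) :
    MaxDominated F (fun ξ : Rn n => Real.exp (-ε * ‖ξ‖ ^ 2)
      * Real.exp (-t * ‖ξ‖ ^ (2 * α))) := by
  refine MaxDominated.of_tendsto hF hF'
    (fun N : ℕ => maxDominated_gaussian_mul_exp_one_sub hn hF hF' (N := (N:ℝ) + 1)
      (T := t * ((N:ℝ) + 1) ^ α) hα hα1 (by positivity) hε (by positivity))
    (integrable_exp_neg_mul_norm_sq hε) (fun N ξ => ?_) (ae_of_all _ fun ξ => ?_)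
  · rw [abs_of_pos (by positivity)]
    refine mul_le_of_le_one_right (Real.exp_pos _).le (Real.exp_le_one_iff.2 ?_)
    have h1 : 0 ≤ 1 - Real.exp (-(‖ξ‖ ^ 2 / ((N:ℝ) + 1))) := by
      have : 0 ≤ ‖ξ‖ ^ 2 / ((N:ℝ) + 1) := by positivity
      have := Real.exp_le_one_iff.2 (neg_nonpos.2 this)
      linarith
    have : 0 ≤ t * ((N:ℝ) + 1) ^ α * (1 - Real.exp (-(‖ξ‖ ^ 2 / ((N:ℝ) + 1)))) ^ α := by
      positivity
    linarith
  · have h := tendsto_mul_one_sub_exp_neg_div (‖ξ‖ ^ 2) (by positivity)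
    have h2 := ((h.rpow_const (p := α) (Or.inr hα.le)).const_mul (-t)).rexp.const_mul
      (Real.exp (-ε * ‖ξ‖ ^ 2))
    have e : (‖ξ‖ ^ 2) ^ α = ‖ξ‖ ^ (2 * α) := by
      rw [Real.rpow_mul (norm_nonneg _)]; norm_num
    rw [e] at h2
    refine h2.congr fun N => ?_
    have h1 : 0 ≤ 1 - Real.exp (-(‖ξ‖ ^ 2 / ((N:ℝ) + 1))) := by
      have : 0 ≤ ‖ξ‖ ^ 2 / ((N:ℝ) + 1) := by positivity
      have := Real.exp_le_one_iff.2 (neg_nonpos.2 this)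
      linarith
    rw [Real.mul_rpow (by positivity) h1]
    ring_nf

lemma integrable_exp_neg_mul_norm_rpow {n : ℕ} (hn : 1 ≤ n) {t q : ℝ} (ht : 0 < t) (hq : 0 < q) :
    Integrable fun ξ : Rn n => Real.exp (-t * ‖ξ‖ ^ q) := by
  have : Nonempty (Fin n) := ⟨⟨0, hn⟩⟩
  have h := (integrable_fun_norm_addHaar (volume : Measure (Rn n))
    (f := fun y : ℝ => Real.exp (-t * y ^ q))).2
  refine h ?_
  have h2 := integrableOn_rpow_mul_exp_neg_mul_rpow (s := (Module.finrank ℝ (Rn n) - 1 : ℕ))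
    (p := q) (b := t)
    (by have := (Nat.cast_nonneg (α := ℝ) (Module.finrank ℝ (Rn n) - 1)); linarith)
    hq ht
  refine h2.congr_fun (fun y _ => ?_) measurableSet_Ioi
  simp only [Real.rpow_natCast, smul_eq_mul]

lemma maxDominated_exp_rpow {n : ℕ} (hn : 1 ≤ n) {F : Rn n → ℝ≥0∞}
    (hF : Measurable F) (hF' : ∀ y, F y ≠ ⊤) {α t : ℝ} (hα : 0 < α) (hα1 : α ≤ 1)
    (ht : 0 < t) :
    MaxDominated F (fun ξ : Rn n => Real.exp (-t * ‖ξ‖ ^ (2 * α))) := by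
  refine MaxDominated.of_tendsto hF hF'
    (fun j : ℕ => maxDominated_gaussian_mul_exp_rpow hn hF hF' (ε := 1 / ((j:ℝ) + 1))
      hα hα1 ht.le (by positivity))
    (integrable_exp_neg_mul_norm_rpow hn ht (by positivity : 0 < 2 * α))
    (fun j ξ => ?_) (ae_of_all _ fun ξ => ?_)
  · rw [abs_of_pos (by positivity)]
    refine mul_le_of_le_one_left (Real.exp_pos _).le (Real.exp_le_one_iff.2 ?_)
    have : 0 ≤ 1 / ((j:ℝ) + 1) * ‖ξ‖ ^ 2 := by positivity
    linarith
  · have h := (((tendsto_one_div_add_atTop_nhds_zero_nat (𝕜 := ℝ)).neg.mul_const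
      (‖ξ‖ ^ 2)).rexp).mul_const (Real.exp (-t * ‖ξ‖ ^ (2 * α)))
    simpa using h

lemma lintegral_gKer_mul_le_dyadicMax {n : ℕ} (hn : 1 ≤ n) {F : Rn n → ℝ≥0∞}
    (hF : Measurable F) (hF' : ∀ y, F y ≠ ⊤) {α t : ℝ} (hα : 0 < α) (hα1 : α ≤ 1)
    (ht : 0 < t) (x : Rn n) :
    ∫⁻ y, ENNReal.ofReal |gKer n α t (x - y)| * F y ≤ 2 ^ n * dyadicMax F x := by
  have h := maxDominated_exp_rpow hn hF hF' hα hα1 ht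
  have e : ∀ z, |gKer n α t z| = multKer (fun ξ : Rn n => Real.exp (-t * ‖ξ‖ ^ (2 * α))) z :=
    fun z => abs_of_nonneg (h.nonneg z)
  simp_rw [e]
  exact h.lintegral_le x

lemma timeSup_conv_gKer_le {n : ℕ} (hn : 1 ≤ n) {α : ℝ} (hα : 0 < α) (hα1 : α ≤ 1)
    {u : Rn n → ℝ} (hu : Measurable u) (x : Rn n) :
    timeSup n (fun t x => conv n (gKer n α t) u x) x
      ≤ 2 ^ n * dyadicMax (fun y => ENNReal.ofReal |u y|) x := by
  refine essSup_le_of_ae_le _ ?_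
  filter_upwards [ae_restrict_mem measurableSet_Ioi] with t ht
  refine le_trans ?_ (lintegral_gKer_mul_le_dyadicMax hn (F := fun y => ENNReal.ofReal |u y|)
    (by fun_prop) (fun y => ENNReal.ofReal_ne_top) hα hα1 ht x)
  have h := enorm_integral_le_lintegral_enorm (μ := volume)
    (fun y => gKer n α t (x - y) * u y)
  rw [Real.enorm_eq_ofReal_abs] at h
  refine h.trans (le_of_eq (lintegral_congr fun y => ?_))
  rw [Real.enorm_eq_ofReal_abs, abs_mul, ENNReal.ofReal_mul (abs_nonneg _)]

lemma one_div_max_eq_min {a b : ℝ} (ha : 0 < a) (hb : 0 < b) :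
    1 / max a b = min (1 / a) (1 / b) := by
  rcases le_total a b with h | h
  · rw [max_eq_right h, min_eq_right (one_div_le_one_div_of_le ha h)]
  · rw [max_eq_left h, min_eq_left (one_div_le_one_div_of_le hb h)]

lemma abs_min_sub_min_le_right (a b c : ℝ) : |min a c - min b c| ≤ |a - b| := by
  simpa using abs_min_sub_min_le_max a c b c

/-- Boundedness of the dyadic maximal function on variable exponent Lebesgue spaces. -/
lemma exists_luxNorm_dyadicMax_le {n : ℕ} (hn : 1 ≤ n) {p : Rn n → ℝ} (hplog : IsPLog univ p)
    {m : ℝ} (hm : 1 < m) (hpm : ∀ᵐ x ∂(volume : Measure (Rn n)), m ≤ p x) :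
    ∃ C : ℝ≥0∞, C ≠ 0 ∧ C ≠ ⊤ ∧ ∀ F : Rn n → ℝ≥0∞, Measurable F →
      luxNorm volume p (fun x => 2 ^ n * dyadicMax F x) ≤ C * luxNorm volume p F := by
  obtain ⟨hp, hp1, A, hA, D, hD, pinf, hlog, hdec⟩ := hplog
  have hp0 : ∀ x, 0 < p x := fun x => zero_lt_one.trans_le (hp1 x (mem_univ x))
  have hm0 : 0 < m := zero_lt_one.trans hm
  obtain ⟨C, hC0, hCt, hC⟩ := exists_lintegral_dyadicMax_div_rpow_le_one hn hm
    (p := fun x => max (p x) m) (hp.max measurable_const) (fun x => le_max_right _ _) hA hD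
    (q := min (1 / pinf) (1 / m))
    (fun x y hxy => by
      rw [one_div_max_eq_min (hp0 x) hm0, one_div_max_eq_min (hp0 y) hm0]
      exact (abs_min_sub_min_le_right _ _ _).trans (hlog x (mem_univ x) y (mem_univ y) hxy))
    (fun x => by
      rw [one_div_max_eq_min (hp0 x) hm0]
      exact (abs_min_sub_min_le_right _ _ _).trans (hdec x (mem_univ x)))
  have hae : ∀ G : Rn n → ℝ≥0∞, ∫⁻ x, G x ^ (max (p x) m) = ∫⁻ x, G x ^ p x := fun G =>
    lintegral_congr_ae (by filter_upwards [hpm] with x hx; rw [max_eq_left hx])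
  have h20 : (2 : ℝ≥0∞) ^ n ≠ 0 := by positivity
  have h2t : (2 : ℝ≥0∞) ^ n ≠ ⊤ := by finiteness
  refine ⟨2 ^ n * C, mul_ne_zero h20 hC0, ENNReal.mul_ne_top h2t hCt, fun F hF => ?_⟩
  rw [mul_comm, ← ENNReal.div_le_iff (mul_ne_zero h20 hC0) (ENNReal.mul_ne_top h2t hCt)]
  refine le_sInf fun lam hlam => ?_
  obtain ⟨hlam0, hlam1⟩ := hlam
  rw [ENNReal.div_le_iff (mul_ne_zero h20 hC0) (ENNReal.mul_ne_top h2t hCt)]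
  rcases eq_or_ne lam ⊤ with rfl | hlamt
  · rw [ENNReal.top_mul (mul_ne_zero h20 hC0)]; exact le_top
  refine sInf_le ⟨by positivity, ?_⟩
  have h := hC (fun x => lam⁻¹ * F x) (hF.const_mul _) (by
    rw [hae]
    simpa only [div_eq_mul_inv, mul_comm] using hlam1)
  rw [hae] at h
  refine le_trans (le_of_eq (lintegral_congr fun x => ?_)) h
  congr 1
  rw [dyadicMax_const_mul _ hF, mul_left_comm, ENNReal.mul_div_mul_left _ _ h20 h2t]
  rw [div_eq_mul_inv, div_eq_mul_inv, ENNReal.mul_inv (Or.inl hlam0.ne') (Or.inl hlamt)]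
  ring

lemma luxNorm_mono {Ω : Type*} [MeasurableSpace Ω] {μ : Measure Ω} {p : Ω → ℝ}
    (hp : ∀ x, 0 ≤ p x) {f g : Ω → ℝ≥0∞} (hfg : ∀ x, f x ≤ g x) :
    luxNorm μ p f ≤ luxNorm μ p g :=
  sInf_le_sInf fun _ hlam => ⟨hlam.1, (lintegral_mono fun x =>
    ENNReal.rpow_le_rpow (ENNReal.div_le_div_right (hfg x) _) (hp x)).trans hlam.2⟩

lemma isPLog_const {n : ℕ} {r : ℝ} (hr : 1 ≤ r) : IsPLog univ (fun _ : Rn n => r) := by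
  refine ⟨measurable_const, fun _ _ => hr, 1, one_pos, 1, one_pos, r, fun x _ y _ _ => ?_,
    fun x _ => ?_⟩
  · rw [sub_self, abs_zero]
    refine div_nonneg zero_le_one (Real.log_nonneg ?_)
    have : 0 ≤ 1 / ‖x - y‖ := by positivity
    linarith [Real.add_one_le_exp 1]
  · rw [sub_self, abs_zero]
    refine div_nonneg zero_le_one (Real.log_nonneg ?_)
    linarith [Real.add_one_le_exp 1, norm_nonneg x]

/-- Control of the heat semigroup on the initial data in mixed variable Lebesgue spaces:
`N_{p(·),r}((t,x) ↦ (𝔤_t^α ∗ u₀)(x)) ≤ C ‖u₀‖_{𝓛^{p(·)}_r}` with `r = nb/(2α − γ)`. -/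
theorem stmt4 (γ n b : ℕ) (hγ : γ = 0 ∨ γ = 1) (hn : 1 ≤ n) (hb : 1 ≤ b)
    (α : ℝ) (hα : 1/2 < α ∧ α ≤ 1) (r : ℝ) (hr : r = (n:ℝ) * b / (2 * α - γ)) (hr1 : 1 < r)
    (p : Rn n → ℝ) (hplog : IsPLog univ p)
    (hpminus : ∃ pm : ℝ, 1 < pm ∧ ∀ᵐ x ∂(volume : Measure (Rn n)), pm ≤ p x) :
    ∃ C > (0:ℝ), ∀ u₀ : Rn n → ℝ, Measurable u₀ →
      luxNormR volume p u₀ < ⊤ → luxNormR volume (fun _ => r) u₀ < ⊤ →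
      mixedN n p r (fun t x => conv n (gKer n α t) u₀ x)
        ≤ ENNReal.ofReal C * mixedNorm n p r u₀ := by
  obtain ⟨pm, hpm, hppm⟩ := hpminus
  obtain ⟨C₁, hC₁0, hC₁t, hC₁⟩ := exists_luxNorm_dyadicMax_le hn hplog hpm hppm
  obtain ⟨C₂, -, hC₂t, hC₂⟩ := exists_luxNorm_dyadicMax_le hn (isPLog_const (n := n) hr1.le) hr1
    (ae_of_all _ fun _ => le_rfl)
  have hα0 : 0 < α := by linarith [hα.1]
  have hCt : max C₁ C₂ ≠ ⊤ := (max_lt hC₁t.lt_top hC₂t.lt_top).ne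
  have hC0 : max C₁ C₂ ≠ 0 := ((pos_iff_ne_zero.2 hC₁0).trans_le (le_max_left _ _)).ne'
  refine ⟨(max C₁ C₂).toReal, ENNReal.toReal_pos hC0 hCt, fun u₀ hu₀ _ _ => ?_⟩
  rw [ENNReal.ofReal_toReal hCt]
  have hF : Measurable fun y => ENNReal.ofReal |u₀ y| := by fun_prop
  have hle := timeSup_conv_gKer_le hn hα0 hα.2 hu₀
  refine max_le ?_ ?_
  · calc _ ≤ C₁ * luxNormR volume p u₀ :=
          (luxNorm_mono (fun x => zero_le_one.trans (hplog.2.1 x (mem_univ x))) hle).trans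
            (hC₁ _ hF)
      _ ≤ _ := by gcongr; exacts [le_max_left _ _, le_max_left _ _]
  · calc _ ≤ C₂ * luxNormR volume (fun _ => r) u₀ :=
          (luxNorm_mono (fun _ => by linarith) hle).trans (hC₂ _ hF)
      _ ≤ _ := by gcongr; exacts [le_max_right _ _, le_max_right _ _]
end
end

section
/- Let n ≥ 1 and α ∈ (0, 1]. There exists a constant C = C(n, α) > 0 such that for every locally integrable u₀ : ℝ^n → ℝ and every x ∈ ℝ^n: sup_{t>0} ∫_{ℝ^n} |𝔤_t^α(x−y)| · |u₀(y)| dy ≤ C · M u₀(x), where both sides are interpreted as values in [0, ∞]. -/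
open MeasureTheory Set
open scoped ENNReal FourierTransform

noncomputable section

/-- The uncentered Hardy–Littlewood maximal function, valued in `[0,∞]`. -/
def maximalFn (n : ℕ) (f : Rn n → ℝ) (x : Rn n) : ℝ≥0∞ :=
  ⨆ (c : Rn n) (r : ℝ) (_ : 0 < r) (_ : x ∈ Metric.ball c r),
    (∫⁻ y in Metric.ball c r, ENNReal.ofReal |f y|) / volume (Metric.ball c r)

section Subordination

open scoped NNReal

/-- The compound Poisson law with finite jump measure `ν` on `[0,∞)`, described through its
Laplace transform. -/
theorem exists_compoundPoisson (ν : Measure ℝ≥0) [IsFiniteMeasure ν] :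
    ∃ μ : Measure ℝ≥0, IsProbabilityMeasure μ ∧ ∀ s : ℝ, 0 ≤ s →
      ∫ u, Real.exp (-(s * u)) ∂μ = Real.exp (-∫ u, (1 - Real.exp (-(s * u))) ∂ν) := by
  have hmeas (s : ℝ) : Measurable fun u : ℝ≥0 => ENNReal.ofReal (Real.exp (-(s * u))) := by
    fun_prop
  have hpow (k : ℕ) : ∃ μ : Measure ℝ≥0, ∀ s : ℝ,
      ∫⁻ u, ENNReal.ofReal (Real.exp (-(s * u))) ∂μ =
        (∫⁻ u, ENNReal.ofReal (Real.exp (-(s * u))) ∂ν) ^ k := by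
    induction k with
    | zero => exact ⟨Measure.dirac 0, fun s => by simp⟩
    | succ k ih =>
      obtain ⟨μ, hμ⟩ := ih
      refine ⟨μ.conv ν, fun s => ?_⟩
      rw [Measure.lintegral_conv (hmeas s), pow_succ, ← hμ s,
        ← lintegral_mul_const _ (hmeas s)]
      refine lintegral_congr fun x => ?_
      rw [← lintegral_const_mul _ (hmeas s)]
      refine lintegral_congr fun y => ?_
      rw [← ENNReal.ofReal_mul (Real.exp_nonneg _), ← Real.exp_add]
      push_cast
      ring_nf
  choose P hP using hpow
  set m : ℝ := ν.real univ
  let μ : Measure ℝ≥0 :=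
    Measure.sum fun k => ENNReal.ofReal (Real.exp (-m) * (k.factorial : ℝ)⁻¹) • P k
  have hbdd (s : ℝ) (hs : 0 ≤ s) (u : ℝ≥0) : ‖Real.exp (-(s * u))‖ ≤ 1 := by
    rw [Real.norm_of_nonneg (Real.exp_nonneg _), Real.exp_le_one_iff]
    have : 0 ≤ s * u := by positivity
    linarith
  have hint (s : ℝ) (hs : 0 ≤ s) : Integrable (fun u : ℝ≥0 => Real.exp (-(s * u))) ν :=
    Integrable.of_bound (by fun_prop) 1 (ae_of_all _ (hbdd s hs))
  have hμ (s : ℝ) (hs : 0 ≤ s) : ∫⁻ u, ENNReal.ofReal (Real.exp (-(s * u))) ∂μ =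
      ENNReal.ofReal (Real.exp (-∫ u, (1 - Real.exp (-(s * u))) ∂ν)) := by
    set a : ℝ := ∫ u, Real.exp (-(s * u)) ∂ν with ha
    have ha0 : 0 ≤ a := integral_nonneg fun u => Real.exp_nonneg _
    have h1 : ∫ u, (1 - Real.exp (-(s * u))) ∂ν = m - a := by
      rw [integral_sub (integrable_const _) (hint s hs)]
      simp [m, ha]
    have h2 : ∫⁻ u, ENNReal.ofReal (Real.exp (-(s * u))) ∂ν = ENNReal.ofReal a :=
      (ofReal_integral_eq_lintegral_ofReal (hint s hs)
        (ae_of_all _ fun u => Real.exp_nonneg _)).symm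
    have h3 : HasSum (fun k : ℕ => Real.exp (-m) * (k.factorial : ℝ)⁻¹ * a ^ k)
        (Real.exp (-m) * Real.exp a) := by
      have := (NormedSpace.expSeries_div_hasSum_exp a).mul_left (Real.exp (-m))
      rw [← Real.exp_eq_exp_ℝ] at this
      simpa only [div_eq_inv_mul, mul_assoc] using this
    rw [lintegral_sum_measure, h1, neg_sub, sub_eq_neg_add, Real.exp_add, ← h3.tsum_eq,
      ENNReal.ofReal_tsum_of_nonneg (fun k => by positivity) h3.summable]
    refine tsum_congr fun k => ?_
    rw [lintegral_smul_measure, hP, h2, smul_eq_mul, ← ENNReal.ofReal_pow ha0,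
      ← ENNReal.ofReal_mul (by positivity)]
  refine ⟨μ, ⟨by simpa using hμ 0 le_rfl⟩, fun s hs => ?_⟩
  rw [integral_eq_lintegral_of_nonneg_ae (ae_of_all _ fun u => Real.exp_nonneg _) (by fun_prop),
    hμ s hs, ENNReal.toReal_ofReal (Real.exp_nonneg _)]

theorem integrableOn_levy {α : ℝ} (h0 : 0 < α) (h1 : α < 1) {s : ℝ} (hs : 0 ≤ s) :
    IntegrableOn (fun u : ℝ => u ^ (-1 - α) * (1 - Real.exp (-(s * u)))) (Ioi 0) := by
  have hm (S : Set ℝ) : AEStronglyMeasurable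
      (fun u : ℝ => u ^ (-1 - α) * (1 - Real.exp (-(s * u)))) (volume.restrict S) := by
    exact Measurable.aestronglyMeasurable (by fun_prop)
  rw [← Ioc_union_Ioi_eq_Ioi (zero_le_one (α := ℝ))]
  refine IntegrableOn.union ?_ ?_
  · have hi : IntegrableOn (fun u : ℝ => s * u ^ (-α)) (Ioc 0 1) := by
      rw [integrableOn_Ioc_iff_integrableOn_Ioo]
      exact ((intervalIntegral.integrableOn_Ioo_rpow_iff one_pos).2 (by linarith)).const_mul s
    refine hi.mono' (hm _) ?_
    filter_upwards [ae_restrict_mem measurableSet_Ioc] with u hu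
    have hsu : 0 ≤ s * u := mul_nonneg hs hu.1.le
    have h2 : 0 ≤ 1 - Real.exp (-(s * u)) := by
      simpa using hsu
    rw [Real.norm_of_nonneg (mul_nonneg (Real.rpow_nonneg hu.1.le _) h2)]
    have h3 : 1 - Real.exp (-(s * u)) ≤ s * u := by
      linarith [Real.add_one_le_exp (-(s * u))]
    calc _ ≤ u ^ (-1 - α) * (s * u) := by gcongr; exact Real.rpow_nonneg hu.1.le _
      _ = s * (u ^ (-1 - α) * u ^ (1 : ℝ)) := by rw [Real.rpow_one]; ring
      _ = s * u ^ (-α) := by rw [← Real.rpow_add hu.1]; ring_nf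
  · refine (integrableOn_Ioi_rpow_of_lt (a := -1 - α) (by linarith) one_pos).mono' (hm _) ?_
    filter_upwards [ae_restrict_mem measurableSet_Ioi] with u hu
    have hu0 : (0 : ℝ) < u := one_pos.trans hu
    have hsu : 0 ≤ s * u := mul_nonneg hs hu0.le
    have h2 : 0 ≤ 1 - Real.exp (-(s * u)) := by
      simpa using hsu
    rw [Real.norm_of_nonneg (mul_nonneg (Real.rpow_nonneg hu0.le _) h2)]
    exact mul_le_of_le_one_right (Real.rpow_nonneg hu0.le _)
      (by linarith [Real.exp_pos (-(s * u))])

theorem integral_levy_pos {α : ℝ} (h0 : 0 < α) (h1 : α < 1) :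
    0 < ∫ u in Ioi (0 : ℝ), u ^ (-1 - α) * (1 - Real.exp (-u)) := by
  have hi := integrableOn_levy h0 h1 zero_le_one
  simp only [one_mul] at hi
  have hpos (u : ℝ) (hu : u ∈ Ioi (0 : ℝ)) : 0 < u ^ (-1 - α) * (1 - Real.exp (-u)) :=
    mul_pos (Real.rpow_pos_of_pos hu _) (by simpa using hu)
  rw [setIntegral_pos_iff_support_of_nonneg_ae
    ((ae_restrict_mem measurableSet_Ioi).mono fun u hu => (hpos u hu).le) hi,
    inter_eq_right.2 fun u hu => Function.mem_support.2 (hpos u hu).ne']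
  simp

theorem integral_levy {α : ℝ} (h0 : 0 < α) {s : ℝ} (hs : 0 ≤ s) :
    ∫ u in Ioi (0 : ℝ), u ^ (-1 - α) * (1 - Real.exp (-(s * u))) =
      s ^ α * ∫ u in Ioi (0 : ℝ), u ^ (-1 - α) * (1 - Real.exp (-u)) := by
  rcases hs.eq_or_lt with rfl | hs
  · simp [Real.zero_rpow h0.ne']
  have h := integral_comp_mul_left_Ioi (fun u : ℝ => u ^ (-1 - α) * (1 - Real.exp (-u))) 0 hs
  rw [mul_zero, smul_eq_mul, eq_inv_mul_iff_mul_eq₀ hs.ne'] at h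
  rw [← h, ← mul_assoc, ← integral_const_mul]
  refine setIntegral_congr_fun measurableSet_Ioi fun u hu => ?_
  have : s ^ α * s * s ^ (-1 - α) = 1 := by
    nth_rewrite 2 [← Real.rpow_one s]
    rw [← Real.rpow_add hs, ← Real.rpow_add hs]
    rw [← Real.rpow_zero s]
    ring_nf
  simp only [Real.mul_rpow hs.le (le_of_lt hu)]
  linear_combination (-(u ^ (-1 - α) * (1 - Real.exp (-(s * u))))) * this

/-- Truncating the Lévy measure of the `α`-stable subordinator away from the origin. -/
theorem exists_truncated_levy {α : ℝ} (h0 : 0 < α) (h1 : α < 1) {t b : ℝ} (ht : 0 < t)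
    (hb : 0 < b) : ∃ ν : Measure ℝ≥0, IsFiniteMeasure ν ∧ ∀ s : ℝ, 0 ≤ s →
      t * s ^ α - b * s ≤ ∫ u, (1 - Real.exp (-(s * u))) ∂ν ∧
      ∫ u, (1 - Real.exp (-(s * u))) ∂ν ≤ t * s ^ α := by
  set K : ℝ := ∫ u in Ioi (0 : ℝ), u ^ (-1 - α) * (1 - Real.exp (-u)) with hK
  have hK0 : 0 < K := integral_levy_pos h0 h1
  have hα : 0 < 1 - α := by linarith
  obtain ⟨ε, hε, hεb⟩ : ∃ ε : ℝ, 0 < ε ∧ t / K * (ε ^ (1 - α) / (1 - α)) = b := by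
    refine ⟨(b * (1 - α) * K / t) ^ (1 - α)⁻¹, by positivity, ?_⟩
    rw [Real.rpow_inv_rpow (by positivity) hα.ne']
    field_simp
  let d : ℝ → ℝ≥0 := fun u => (t / K * u ^ (-1 - α)).toNNReal
  have hd : Measurable d := by fun_prop
  have hd' (u : ℝ) (hu : 0 < u) : (d u : ℝ) = t / K * u ^ (-1 - α) :=
    Real.coe_toNNReal _ (by positivity)
  let ρ : Measure ℝ := (volume.restrict (Ioi ε)).withDensity fun u => d u
  have hρ : IsFiniteMeasure ρ := by
    refine isFiniteMeasure_withDensity_ofReal (f := fun u => t / K * u ^ (-1 - α)) ?_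
    exact ((integrableOn_Ioi_rpow_of_lt (a := -1 - α) (by linarith) hε).const_mul _).2
  refine ⟨ρ.map Real.toNNReal, inferInstance, fun s hs => ?_⟩
  have hν : ∫ u, (1 - Real.exp (-(s * u))) ∂(ρ.map Real.toNNReal) =
      t / K * ∫ u in Ioi ε, u ^ (-1 - α) * (1 - Real.exp (-(s * u))) := by
    rw [integral_map (by fun_prop) (by fun_prop), integral_withDensity_eq_integral_smul hd,
      ← integral_const_mul]
    refine setIntegral_congr_fun measurableSet_Ioi fun u hu => ?_
    have hu0 : 0 < u := hε.trans hu
    simp only [NNReal.smul_def, hd' u hu0, Real.coe_toNNReal u hu0.le, smul_eq_mul, mul_assoc]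
  have hint := integrableOn_levy h0 h1 hs
  have hsplit : t * s ^ α = t / K * (∫ u in Ioc 0 ε, u ^ (-1 - α) * (1 - Real.exp (-(s * u)))) +
      t / K * ∫ u in Ioi ε, u ^ (-1 - α) * (1 - Real.exp (-(s * u))) := by
    rw [← mul_add, ← setIntegral_union (by simp) measurableSet_Ioi
      (hint.mono_set Ioc_subset_Ioi_self) (hint.mono_set (Ioi_subset_Ioi hε.le)),
      Ioc_union_Ioi_eq_Ioi hε.le, integral_levy h0 hs, ← hK]
    field_simp
  have hnonneg (u : ℝ) (hu : 0 < u) : 0 ≤ 1 - Real.exp (-(s * u)) := by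
    simpa using mul_nonneg hs hu.le
  have hlow : 0 ≤ ∫ u in Ioc 0 ε, u ^ (-1 - α) * (1 - Real.exp (-(s * u))) :=
    setIntegral_nonneg measurableSet_Ioc fun u hu =>
      mul_nonneg (Real.rpow_nonneg hu.1.le _) (hnonneg u hu.1)
  have hupp : ∫ u in Ioc 0 ε, u ^ (-1 - α) * (1 - Real.exp (-(s * u))) ≤
      s * (ε ^ (1 - α) / (1 - α)) := by
    have hr : ∫ u in Ioc 0 ε, u ^ (-α) = ε ^ (1 - α) / (1 - α) := by
      rw [← intervalIntegral.integral_of_le hε.le, integral_rpow (Or.inl (by linarith)),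
        neg_add_eq_sub, Real.zero_rpow hα.ne', sub_zero]
    have hi : IntegrableOn (fun u : ℝ => s * u ^ (-α)) (Ioc 0 ε) := by
      rw [integrableOn_Ioc_iff_integrableOn_Ioo]
      exact ((intervalIntegral.integrableOn_Ioo_rpow_iff hε).2 (by linarith)).const_mul s
    rw [← hr, ← integral_const_mul]
    refine setIntegral_mono_on (hint.mono_set Ioc_subset_Ioi_self) hi measurableSet_Ioc
      fun u hu => ?_
    have h3 : 1 - Real.exp (-(s * u)) ≤ s * u := by
      linarith [Real.add_one_le_exp (-(s * u))]
    calc _ ≤ u ^ (-1 - α) * (s * u) := by gcongr; exact Real.rpow_nonneg hu.1.le _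
      _ = s * (u ^ (-1 - α) * u ^ (1 : ℝ)) := by rw [Real.rpow_one]; ring
      _ = s * u ^ (-α) := by rw [← Real.rpow_add hu.1]; ring_nf
  have hc : 0 < t / K := by positivity
  rw [hν]
  constructor
  · have := mul_le_mul_of_nonneg_left hupp hc.le
    rw [← hεb]
    linarith
  · have := mul_nonneg hc.le hlow
    linarith

/-- Approximate subordination: up to an arbitrarily small drift, `s ↦ exp (-t s ^ α)` is the
Laplace transform of a probability measure. -/
theorem exists_subordinator {α : ℝ} (h0 : 0 < α) (h1 : α ≤ 1) {t b : ℝ} (ht : 0 < t)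
    (hb : 0 < b) : ∃ μ : Measure ℝ≥0, IsProbabilityMeasure μ ∧ ∀ s : ℝ, 0 ≤ s →
      Real.exp (-t * s ^ α) ≤ ∫ u, Real.exp (-(s * u)) ∂μ ∧
      ∫ u, Real.exp (-(s * u)) ∂μ ≤ Real.exp (-t * s ^ α + b * s) := by
  rcases h1.eq_or_lt with rfl | h1
  · refine ⟨Measure.dirac t.toNNReal, inferInstance, fun s hs => ?_⟩
    rw [integral_dirac, Real.coe_toNNReal t ht.le, Real.rpow_one]
    constructor <;> rw [Real.exp_le_exp] <;> nlinarith [mul_nonneg hb.le hs]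
  · obtain ⟨ν, _, hν⟩ := exists_truncated_levy h0 h1 ht hb
    obtain ⟨μ, hμ, h⟩ := exists_compoundPoisson ν
    refine ⟨μ, hμ, fun s hs => ?_⟩
    obtain ⟨h2, h3⟩ := hν s hs
    rw [h s hs]
    constructor <;> rw [Real.exp_le_exp] <;> linarith

end Subordination

section GaussianKernel

open scoped NNReal

variable {V : Type*} [NormedAddCommGroup V] [InnerProductSpace ℝ V]

/-- The inverse Fourier transform of `ξ ↦ exp (-v ‖ξ‖ ^ 2)`. -/
def gaussKer (v : ℝ) (x : V) : ℝ :=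
  (Real.pi / v) ^ (Module.finrank ℝ V / 2 : ℝ) * Real.exp (-Real.pi ^ 2 * ‖x‖ ^ 2 / v)

theorem gaussKer_nonneg {v : ℝ} (hv : 0 < v) (x : V) : 0 ≤ gaussKer v x := by
  unfold gaussKer
  positivity

theorem setOf_lt_gaussKer {v h : ℝ} (hv : 0 < v) (hh : 0 < h) (x : V) :
    ∃ r : ℝ, {y | h < gaussKer v (x - y)} = Metric.ball x r := by
  set A : ℝ := (Real.pi / v) ^ (Module.finrank ℝ V / 2 : ℝ) with hA
  have hA0 : 0 < A := by positivity
  refine ⟨√(-(v * Real.log (h / A)) / Real.pi ^ 2), ?_⟩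
  ext y
  rw [mem_ofPred_eq, Metric.mem_ball', dist_eq_norm, Real.lt_sqrt (norm_nonneg _), gaussKer, ← hA,
    ← div_lt_iff₀' hA0, ← Real.log_lt_iff_lt_exp (by positivity), lt_div_iff₀ hv,
    lt_div_iff₀ (by positivity)]
  constructor <;> intro <;> linarith

variable [MeasurableSpace V] [BorelSpace V]

theorem measurable_gaussKer_mixture (b : ℝ) (x : V) :
    Measurable fun p : V × ℝ≥0 => gaussKer (p.2 + b) (x - p.1) := by
  unfold gaussKer
  fun_prop

variable [FiniteDimensional ℝ V]

theorem fourierInv_exp_neg_mul_sq_norm {v : ℝ} (hv : 0 < v) (x : V) :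
    𝓕⁻ (fun ξ : V => (Real.exp (-v * ‖ξ‖ ^ 2) : ℂ)) x = (gaussKer v x : ℂ) := by
  have h := fourier_gaussian_innerProductSpace (b := (v : ℂ)) (V := V) (by simpa using hv) (-x)
  rw [Real.fourierInv_eq_fourier_neg]
  convert h using 2
  · push_cast
    rfl
  · rw [gaussKer, norm_neg]
    push_cast
    rw [Complex.ofReal_cpow (by positivity)]
    push_cast
    rfl

theorem lintegral_gaussKer {v : ℝ} (hv : 0 < v) (x : V) :
    ∫⁻ y, ENNReal.ofReal (gaussKer v (x - y)) = 1 := by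
  have hb : 0 < Real.pi ^ 2 / v := by positivity
  have hform (y : V) : gaussKer v y = (Real.pi / v) ^ (Module.finrank ℝ V / 2 : ℝ) *
      Real.exp (-(Real.pi ^ 2 / v) * ‖y‖ ^ 2) := by
    rw [gaussKer]
    ring_nf
  have h1 : ∫ y : V, Real.exp (-(Real.pi ^ 2 / v) * ‖y‖ ^ 2) =
      (Real.pi / (Real.pi ^ 2 / v)) ^ (Module.finrank ℝ V / 2 : ℝ) :=
    GaussianFourier.integral_rexp_neg_mul_sq_norm hb
  have hI : ∫ y : V, gaussKer v y = 1 := by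
    simp_rw [hform, integral_const_mul, h1]
    rw [← Real.mul_rpow (by positivity) (by positivity)]
    have : Real.pi / v * (Real.pi / (Real.pi ^ 2 / v)) = 1 := by
      field_simp
    rw [this, Real.one_rpow]
  have hi : Integrable (fun y : V => gaussKer v y) :=
    Integrable.of_integral_ne_zero (by rw [hI]; exact one_ne_zero)
  rw [lintegral_sub_left_eq_self (fun y : V => ENNReal.ofReal (gaussKer v y)) x,
    ← ofReal_integral_eq_lintegral_ofReal hi (ae_of_all _ fun y => gaussKer_nonneg hv y), hI,
    ENNReal.ofReal_one]

/-- Layer-cake comparison of a radially decreasing kernel with averages over balls. -/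
theorem lintegral_gaussKer_le {ν : Measure V} {M : ℝ≥0∞} {x : V}
    (hν : ∀ r > 0, ν (Metric.ball x r) ≤ M * volume (Metric.ball x r)) {v : ℝ} (hv : 0 < v) :
    ∫⁻ y, ENNReal.ofReal (gaussKer v (x - y)) ∂ν ≤ M := by
  have hm : Measurable fun y : V => gaussKer v (x - y) := by
    unfold gaussKer
    fun_prop
  calc ∫⁻ y, ENNReal.ofReal (gaussKer v (x - y)) ∂ν
      = ∫⁻ h in Ioi (0 : ℝ), ν {y | h < gaussKer v (x - y)} :=
        lintegral_eq_lintegral_meas_lt ν (ae_of_all _ fun y => gaussKer_nonneg hv _)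
          hm.aemeasurable
    _ ≤ ∫⁻ h in Ioi (0 : ℝ), M * volume {y | h < gaussKer v (x - y)} := by
        refine setLIntegral_mono' measurableSet_Ioi fun h hh => ?_
        obtain ⟨r, hr⟩ := setOf_lt_gaussKer (V := V) hv hh x
        rw [hr]
        rcases le_or_gt r 0 with h0 | h0
        · simp [Metric.ball_eq_empty.2 h0]
        · exact hν r h0
    _ = M * ∫⁻ h in Ioi (0 : ℝ), volume {y | h < gaussKer v (x - y)} := by
        refine lintegral_const_mul _ (Antitone.measurable fun a b hab => ?_)
        exact measure_mono fun y hy => lt_of_le_of_lt hab hy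
    _ = M := by
        rw [← lintegral_eq_lintegral_meas_lt volume (ae_of_all _ fun y => gaussKer_nonneg hv _)
          hm.aemeasurable, lintegral_gaussKer hv, mul_one]

theorem lintegral_gaussKer_mixture_le {ν : Measure V} [SFinite ν] {M : ℝ≥0∞} {x : V}
    (hν : ∀ r > 0, ν (Metric.ball x r) ≤ M * volume (Metric.ball x r)) {b : ℝ} (hb : 0 < b)
    (μ : Measure ℝ≥0) [IsProbabilityMeasure μ] :
    ∫⁻ y, ‖∫ u, gaussKer (u + b) (x - y) ∂μ‖ₑ ∂ν ≤ M := by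
  calc ∫⁻ y, ‖∫ u, gaussKer (u + b) (x - y) ∂μ‖ₑ ∂ν
      ≤ ∫⁻ y, ∫⁻ u, ENNReal.ofReal (gaussKer (u + b) (x - y)) ∂μ ∂ν := by
        refine lintegral_mono fun y => (enorm_integral_le_lintegral_enorm _).trans_eq ?_
        exact lintegral_congr fun u => Real.enorm_of_nonneg (gaussKer_nonneg (by positivity) _)
    _ = ∫⁻ u, ∫⁻ y, ENNReal.ofReal (gaussKer (u + b) (x - y)) ∂ν ∂μ :=
        lintegral_lintegral_swap (measurable_gaussKer_mixture b x).ennreal_ofReal.aemeasurable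
    _ ≤ ∫⁻ _, M ∂μ := lintegral_mono fun u => lintegral_gaussKer_le hν (by positivity)
    _ = M := by simp

theorem integrable_exp_neg_mul_sq_norm {b : ℝ} (hb : 0 < b) :
    Integrable fun ξ : V => Real.exp (-b * ‖ξ‖ ^ 2) :=
  Integrable.of_integral_ne_zero (by
    rw [GaussianFourier.integral_rexp_neg_mul_sq_norm hb]
    positivity)

/-- A mixture of Gaussian symbols is the symbol of the corresponding mixture of Gaussian
kernels. -/
theorem fourierInv_gaussian_mixture {b : ℝ} (hb : 0 < b) (μ : Measure ℝ≥0)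
    [IsProbabilityMeasure μ] (x : V) :
    𝓕⁻ (fun ξ : V => ((Real.exp (-b * ‖ξ‖ ^ 2) * ∫ u, Real.exp (-(‖ξ‖ ^ 2 * u)) ∂μ : ℝ) : ℂ)) x =
      ((∫ u, gaussKer (u + b) x ∂μ : ℝ) : ℂ) := by
  let F : V → ℝ≥0 → ℂ := fun ξ u =>
    Complex.exp ((2 * Real.pi * inner ℝ ξ x : ℝ) * Complex.I) *
      (Real.exp (-(u + b) * ‖ξ‖ ^ 2) : ℂ)
  have hF : Integrable (Function.uncurry F) (volume.prod μ) := by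
    refine ((integrable_exp_neg_mul_sq_norm (V := V) hb).comp_fst μ).mono' ?_ (ae_of_all _ ?_)
    · refine Measurable.aestronglyMeasurable ?_
      simp only [F, Function.uncurry_def]
      fun_prop
    · rintro ⟨ξ, u⟩
      simp only [F, Function.uncurry_apply_pair, norm_mul, Complex.norm_exp_ofReal_mul_I, one_mul,
        Complex.norm_real, Real.norm_eq_abs, Real.abs_exp, Real.exp_le_exp]
      have : 0 ≤ (u : ℝ) * ‖ξ‖ ^ 2 := by positivity
      linarith
  rw [Real.fourierInv_eq', ← integral_complex_ofReal]
  calc _ = ∫ ξ, ∫ u, F ξ u ∂μ := by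
        refine integral_congr_ae (ae_of_all _ fun ξ => ?_)
        simp only [F, smul_eq_mul]
        rw [integral_const_mul, ← integral_const_mul, ← integral_complex_ofReal]
        congr 2 with u
        rw [← Real.exp_add]
        ring_nf
    _ = ∫ u, (∫ ξ, F ξ u) ∂μ := integral_integral_swap hF
    _ = _ := by
        refine integral_congr_ae (ae_of_all _ fun u => ?_)
        simp only
        rw [← fourierInv_exp_neg_mul_sq_norm (by positivity), Real.fourierInv_eq']
        rfl

theorem integrable_exp_neg_mul_rpow_norm [Nontrivial V] {t p : ℝ} (ht : 0 < t) (hp : 0 < p) :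
    Integrable fun ξ : V => Real.exp (-t * ‖ξ‖ ^ p) := by
  rw [integrable_fun_norm_addHaar volume (f := fun r => Real.exp (-t * r ^ p))]
  have h : (-1 : ℝ) < (Module.finrank ℝ V - 1 : ℕ) := by
    linarith [Nat.cast_nonneg (α := ℝ) (Module.finrank ℝ V - 1)]
  simpa only [Real.rpow_natCast, smul_eq_mul] using
    integrableOn_rpow_mul_exp_neg_mul_rpow h hp ht

end GaussianKernel

theorem measure_ball_le_maximalFn {n : ℕ} (u : Rn n → ℝ) (x : Rn n) {r : ℝ} (hr : 0 < r) :
    (volume.withDensity fun y => ENNReal.ofReal |u y|) (Metric.ball x r) ≤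
      maximalFn n u x * volume (Metric.ball x r) := by
  rw [withDensity_apply _ measurableSet_ball,
    ← ENNReal.div_le_iff (Metric.measure_ball_pos _ _ hr).ne' measure_ball_lt_top.ne]
  exact le_iSup₂_of_le x r (le_iSup₂_of_le hr (Metric.mem_ball_self hr) le_rfl)

/-- The fractional heat kernel is a pointwise limit of mixtures of Gaussian kernels. -/
theorem exists_tendsto_gKer {n : ℕ} (hn : 1 ≤ n) {α t : ℝ} (h0 : 0 < α) (h1 : α ≤ 1)
    (ht : 0 < t) : ∃ (b : ℕ → ℝ) (μ : ℕ → Measure NNReal),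
      (∀ j, 0 < b j) ∧ (∀ j, IsProbabilityMeasure (μ j)) ∧
      ∀ x : Rn n, Filter.Tendsto (fun j => ∫ u, gaussKer (u + b j) x ∂(μ j)) Filter.atTop
        (nhds (gKer n α t x)) := by
  have : Nonempty (Fin n) := ⟨⟨0, hn⟩⟩
  let b : ℕ → ℝ := fun j => 1 / ((j : ℝ) + 1)
  have hb (j : ℕ) : 0 < b j := by positivity
  have hb_lim : Filter.Tendsto b Filter.atTop (nhds 0) :=
    tendsto_one_div_add_atTop_nhds_zero_nat
  choose μ hμ hμs using fun j => exists_subordinator h0 h1 ht (hb j)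
  refine ⟨b, μ, hb, hμ, fun x => ?_⟩
  let Φ : ℕ → Rn n → ℝ := fun j ξ =>
    Real.exp (-b j * ‖ξ‖ ^ 2) * ∫ u, Real.exp (-(‖ξ‖ ^ 2 * u)) ∂(μ j)
  have hpow (ξ : Rn n) : (‖ξ‖ ^ 2) ^ α = ‖ξ‖ ^ (2 * α) := by
    rw [Real.rpow_mul (norm_nonneg _), Real.rpow_two]
  have hle (j : ℕ) (ξ : Rn n) : Φ j ξ ≤ Real.exp (-t * ‖ξ‖ ^ (2 * α)) := by
    calc Φ j ξ ≤ Real.exp (-b j * ‖ξ‖ ^ 2) *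
          Real.exp (-t * (‖ξ‖ ^ 2) ^ α + b j * ‖ξ‖ ^ 2) :=
          mul_le_mul_of_nonneg_left (hμs j _ (by positivity)).2 (Real.exp_nonneg _)
      _ = _ := by rw [← Real.exp_add, hpow]; ring_nf
  have hge (j : ℕ) (ξ : Rn n) :
      Real.exp (-b j * ‖ξ‖ ^ 2) * Real.exp (-t * ‖ξ‖ ^ (2 * α)) ≤ Φ j ξ := by
    rw [← hpow]
    exact mul_le_mul_of_nonneg_left (hμs j _ (by positivity)).1 (Real.exp_nonneg _)
  have hlim (ξ : Rn n) : Filter.Tendsto (fun j => Φ j ξ) Filter.atTop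
      (nhds (Real.exp (-t * ‖ξ‖ ^ (2 * α)))) := by
    refine tendsto_of_tendsto_of_tendsto_of_le_of_le ?_ tendsto_const_nhds
      (fun j => hge j ξ) (fun j => hle j ξ)
    have h := ((Real.continuous_exp.tendsto _).comp (hb_lim.neg.mul_const (‖ξ‖ ^ 2))).mul_const
      (Real.exp (-t * ‖ξ‖ ^ (2 * α)))
    simpa using h
  have hmeas (j : ℕ) : StronglyMeasurable (Φ j) := by
    have h : Measurable fun p : Rn n × NNReal => Real.exp (-(‖p.1‖ ^ 2 * p.2)) := by fun_prop
    have h2 : Measurable fun ξ : Rn n => Real.exp (-b j * ‖ξ‖ ^ 2) := by fun_prop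
    exact h2.stronglyMeasurable.mul h.stronglyMeasurable.integral_prod_right'
  have key : Filter.Tendsto (fun j => 𝓕⁻ (fun ξ : Rn n => (Φ j ξ : ℂ)) x) Filter.atTop
      (nhds (𝓕⁻ (fun ξ : Rn n => (Real.exp (-t * ‖ξ‖ ^ (2 * α)) : ℂ)) x)) := by
    simp only [Real.fourierInv_eq']
    refine tendsto_integral_of_dominated_convergence
      (fun ξ => Real.exp (-t * ‖ξ‖ ^ (2 * α))) (fun j => ?_)
      (integrable_exp_neg_mul_rpow_norm ht (by positivity)) (fun j => ae_of_all _ fun ξ => ?_)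
      (ae_of_all _ fun ξ => ?_)
    · refine AEStronglyMeasurable.smul (f := fun ξ : Rn n => Complex.exp
        ((2 * Real.pi * inner ℝ ξ x : ℝ) * Complex.I))
        (Measurable.aestronglyMeasurable (by fun_prop)) ?_
      exact (Complex.continuous_ofReal.comp_stronglyMeasurable (hmeas j)).aestronglyMeasurable
    · have hΦ : 0 ≤ Φ j ξ := (by positivity : (0 : ℝ) ≤ _).trans (hge j ξ)
      rw [norm_smul, Complex.norm_exp_ofReal_mul_I, one_mul, Complex.norm_real,
        Real.norm_of_nonneg hΦ]
      exact hle j ξ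
    · exact ((Complex.continuous_ofReal.tendsto _).comp (hlim ξ)).const_smul _
  have hre := (Complex.continuous_re.tendsto _).comp key
  refine hre.congr fun j => ?_
  rw [Function.comp_apply, fourierInv_gaussian_mixture (hb j) (μ j) x, Complex.ofReal_re]

/-- Pointwise control of the fractional heat semigroup by the maximal function:
`sup_{t>0} ∫ |𝔤_t^α(x−y)| |u₀(y)| dy ≤ C · M u₀(x)`. -/
theorem stmt5 (n : ℕ) (hn : 1 ≤ n) (α : ℝ) (hα : 0 < α ∧ α ≤ 1) :
    ∃ C > (0:ℝ), ∀ u₀ : Rn n → ℝ, LocallyIntegrable u₀ volume → ∀ x : Rn n,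
      (⨆ (t : ℝ) (_ : 0 < t), ∫⁻ y, ENNReal.ofReal (|gKer n α t (x - y)| * |u₀ y|))
        ≤ ENNReal.ofReal C * maximalFn n u₀ x := by
  obtain ⟨h0, h1⟩ := hα
  refine ⟨1, one_pos, fun u₀ hu x => iSup₂_le fun t ht => ?_⟩
  rw [ENNReal.ofReal_one, one_mul]
  obtain ⟨b, μ, hb, hμ, hlim⟩ := exists_tendsto_gKer hn h0 h1 ht
  set ν : Measure (Rn n) := volume.withDensity fun y => ENNReal.ofReal |u₀ y|
  have hu' : AEMeasurable (fun y => ENNReal.ofReal |u₀ y|) volume := by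
    have := hu.aestronglyMeasurable.aemeasurable
    fun_prop
  have hk (j : ℕ) : Measurable fun y : Rn n => ‖∫ u, gaussKer (u + b j) (x - y) ∂(μ j)‖ₑ :=
    (measurable_gaussKer_mixture (b j) x).stronglyMeasurable.integral_prod_right'.enorm
  have hlim' (y : Rn n) : Filter.Tendsto
      (fun j => ‖∫ u, gaussKer (u + b j) (x - y) ∂(μ j)‖ₑ) Filter.atTop
      (nhds ‖gKer n α t (x - y)‖ₑ) := (hlim (x - y)).enorm
  have hg : Measurable fun y : Rn n => ‖gKer n α t (x - y)‖ₑ :=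
    measurable_of_tendsto_metrizable hk (tendsto_pi_nhds.2 hlim')
  calc ∫⁻ y, ENNReal.ofReal (|gKer n α t (x - y)| * |u₀ y|)
      = ∫⁻ y, ‖gKer n α t (x - y)‖ₑ ∂ν := by
        rw [lintegral_withDensity_eq_lintegral_mul₀ hu' hg.aemeasurable]
        refine lintegral_congr fun y => ?_
        rw [Pi.mul_apply, mul_comm, ENNReal.ofReal_mul (abs_nonneg _), Real.enorm_eq_ofReal_abs]
    _ = ∫⁻ y, Filter.liminf
          (fun j => ‖∫ u, gaussKer (u + b j) (x - y) ∂(μ j)‖ₑ) Filter.atTop ∂ν :=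
        lintegral_congr fun y => (hlim' y).liminf_eq.symm
    _ ≤ Filter.liminf
          (fun j => ∫⁻ y, ‖∫ u, gaussKer (u + b j) (x - y) ∂(μ j)‖ₑ ∂ν) Filter.atTop :=
        lintegral_liminf_le hk
    _ ≤ maximalFn n u₀ x :=
        Filter.liminf_le_of_frequently_le' (Filter.Frequently.of_forall fun j =>
          lintegral_gaussKer_mixture_le (fun r hr => measure_ball_le_maximalFn u₀ x hr) (hb j) (μ j))
end
end
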